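/- arXiv:2503.10208 — 3 statements merged into one kernel-verified Lean document; each statement's English description precedes it below -/
import Mathlib

section
/- Let n ≥ 2 and let L, M be smooth operator fields on ℝⁿ whose values are strictly upper triangular matrices at every point. Let α₁, β₁, α₂, β₂, α₃, β₃ be nonnegative integers with α₁ + β₁ + α₂ + β₂ + α₃ + β₃ = 2n − 2, and let ∂_{x_i}, ∂_{x_j} denote constant coordinate vector fields with i < n or j < n. Then the vector field L^{α₁}M^{β₁}[L^{α₂}M^{β₂}∂_{x_i}, L^{α₃}M^{β₃}∂_{x_j}] vanishes identically on ℝⁿ (here matrix powers are taken pointwise and applied to vector fields pointwise, and [·,·] is the Lie bracket of vector fields). -/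
/-!
Each strictly upper triangular factor pushes vectors one step down the flag
`span(e₀) ⊂ span(e₀, e₁) ⊂ ⋯`, so a product of `k` such factors lowers the flag index by `k`
(`ShiftsBy.mul`, `ShiftsBy.pow`, `ShiftsBy.mulVec`). Put `kₗ = αₗ + βₗ`, and index coordinates
from `0`. Then `ξ = L^{α₂}M^{β₂}∂ᵢ` takes values in `span(e₀, …, e_{i-k₂})`, which is zero when
`i < k₂`, and `η = L^{α₃}M^{β₃}∂ⱼ` takes values in `span(e₀, …, e_{j-k₃})`. The flag consists of
constant subspaces, so `Dη(ξ)` stays in the subspace of `η` (`fderiv_apply_eq_zero`), and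
`L^{α₁}M^{β₁}` maps it to `span(e₀, …, e_{j-k₃-k₁})`. Hence `L^{α₁}M^{β₁}(Dη(ξ))` can be nonzero
only if `k₂ ≤ i` and `k₁ + k₃ ≤ j`, whence `k₁ + k₂ + k₃ ≤ i + j ≤ 2n - 3`, which is excluded
(`mulVec_fderiv_eq_zero`). The term `Dξ(η)` is symmetric.
-/

open Matrix

/-- A vector field on ℝⁿ. -/
abbrev Vec (n : ℕ) := Fin n → ℝ
abbrev VF (n : ℕ) := Vec n → Vec n
abbrev OpField (n : ℕ) := Vec n → Matrix (Fin n) (Fin n) ℝ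

/-- Smooth (C^∞) vector field. -/
def SmoothVF {n : ℕ} (ξ : VF n) : Prop := ContDiff ℝ (⊤ : ℕ∞) ξ

/-- Smooth (C^∞) operator field, entrywise. -/
def SmoothOp {n : ℕ} (L : OpField n) : Prop :=
  ∀ i j : Fin n, ContDiff ℝ (⊤ : ℕ∞) fun x => L x i j

/-- Lie bracket of vector fields. -/
noncomputable def lieB {n : ℕ} (ξ η : VF n) : VF n :=
  fun x => fderiv ℝ η x (ξ x) - fderiv ℝ ξ x (η x)

/-- Pointwise action of an operator field on a vector field. -/
def app {n : ℕ} (L : OpField n) (ξ : VF n) : VF n := fun x => (L x).mulVec (ξ x)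

/-- Nijenhuis torsion. -/
noncomputable def nijTor {n : ℕ} (L : OpField n) (ξ η : VF n) : VF n :=
  app L (app L (lieB ξ η)) + lieB (app L ξ) (app L η)
    - app L (lieB (app L ξ) η) - app L (lieB ξ (app L η))

/-- Generalized Haantjes torsion: `genTor L m` is the torsion of level `m + 1`,
so `genTor L 0` is the Nijenhuis torsion `T^{(1)}_L` and `genTor L (m-1) = T^{(m)}_L`. -/
noncomputable def genTor {n : ℕ} (L : OpField n) : ℕ → VF n → VF n → VF n
  | 0 => nijTor L
  | m + 1 => fun ξ η =>
      app L (app L (genTor L m ξ η)) + genTor L m (app L ξ) (app L η)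
        - app L (genTor L m (app L ξ) η) - app L (genTor L m ξ (app L η))

/-- The Haantjes torsion `H_L = T^{(2)}_L`. -/
noncomputable def haantjes {n : ℕ} (L : OpField n) : VF n → VF n → VF n := genTor L 1

/-- Frölicher–Nijenhuis bracket of two operator fields. -/
noncomputable def fnB {n : ℕ} (K L : OpField n) (ξ η : VF n) : VF n :=
  lieB (app K ξ) (app L η) + lieB (app L ξ) (app K η)
    - app L (lieB (app K ξ) η) - app L (lieB ξ (app K η))
    - app K (lieB (app L ξ) η) - app K (lieB ξ (app L η))
    + app L (app K (lieB ξ η)) + app K (app L (lieB ξ η))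

/-- Generalized Haantjes bracket: `genB K L m` is the bracket of level `m + 1`,
so `genB K L 0 = [[K,L]]` and `genB K L (m-1) = H^{(m)}_{K,L}`. -/
noncomputable def genB {n : ℕ} (K L : OpField n) : ℕ → VF n → VF n → VF n
  | 0 => fnB K L
  | m + 1 => fun ξ η =>
      app K (app L (genB K L m ξ η)) + genB K L m (app K ξ) (app L η)
        - app L (genB K L m (app K ξ) η) - app K (genB K L m ξ (app L η))
        + app L (app K (genB K L m ξ η)) + genB K L m (app L ξ) (app K η)
        - app K (genB K L m (app L ξ) η) - app L (genB K L m ξ (app K η))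

/-- Upper triangular matrix. -/
def UpperTri {n : ℕ} (A : Matrix (Fin n) (Fin n) ℝ) : Prop :=
  ∀ i j : Fin n, j < i → A i j = 0

/-- Strictly upper triangular matrix. -/
def StrictUpperTri {n : ℕ} (A : Matrix (Fin n) (Fin n) ℝ) : Prop :=
  ∀ i j : Fin n, j ≤ i → A i j = 0

/-- Jacobian matrix of a map `f : ℝⁿ → ℝⁿ` at a point. -/
noncomputable def jacobianMatrix {n : ℕ} (f : VF n) (x : Vec n) :
    Matrix (Fin n) (Fin n) ℝ :=
  Matrix.of fun i j => fderiv ℝ f x (Pi.single j 1) i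

/-- `L` is locally reducible, near `p`, to a form whose matrix satisfies `P`
(e.g. upper triangularity) in suitable local coordinates: there are an open
neighbourhood `U` of `p` and a smooth diffeomorphism `φ` from `U` onto an open
set, with smooth inverse `ψ`, such that the pushforward operator field
`y ↦ Dφ(φ⁻¹ y) · L(φ⁻¹ y) · (Dφ(φ⁻¹ y))⁻¹ = Dφ(ψ y) · L(ψ y) · Dψ(y)`
satisfies `P` at every point of `φ '' U`. -/
def LocallyReducible {n : ℕ} (L : OpField n) (p : Vec n)
    (P : Matrix (Fin n) (Fin n) ℝ → Prop) : Prop :=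
  ∃ U : Set (Vec n), IsOpen U ∧ p ∈ U ∧
    ∃ φ ψ : VF n,
      ContDiffOn ℝ (⊤ : ℕ∞) φ U ∧ IsOpen (φ '' U) ∧
      ContDiffOn ℝ (⊤ : ℕ∞) ψ (φ '' U) ∧
      (∀ x ∈ U, ψ (φ x) = x) ∧ (∀ y ∈ φ '' U, φ (ψ y) = y) ∧
      ∀ y ∈ φ '' U, P (jacobianMatrix φ (ψ y) * L (ψ y) * jacobianMatrix ψ y)

/-- The matrix `A` lowers the standard flag by `k` steps: its entries vanish strictly below the
`k`-th superdiagonal. -/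
def ShiftsBy {n : ℕ} (A : Matrix (Fin n) (Fin n) ℝ) (k : ℕ) : Prop :=
  ∀ r s : Fin n, (s : ℕ) < r + k → A r s = 0

theorem ShiftsBy.mul {n : ℕ} {A B : Matrix (Fin n) (Fin n) ℝ} {k l : ℕ}
    (hA : ShiftsBy A k) (hB : ShiftsBy B l) : ShiftsBy (A * B) (k + l) := by
  intro r s h
  rw [Matrix.mul_apply]
  refine Finset.sum_eq_zero fun t _ => ?_
  by_cases ht : (t : ℕ) < r + k
  · rw [hA r t ht, zero_mul]
  · rw [hB t s (by omega), mul_zero]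

theorem ShiftsBy.pow {n : ℕ} {A : Matrix (Fin n) (Fin n) ℝ}
    (hA : StrictUpperTri A) (k : ℕ) : ShiftsBy (A ^ k) k := by
  induction k with
  | zero =>
    intro r s h
    rw [pow_zero, Matrix.one_apply_ne]
    rintro rfl
    omega
  | succ k ih =>
    rw [pow_succ]
    exact ih.mul fun r s h => hA r s (Fin.le_def.mpr (by omega))

theorem ShiftsBy.mulVec {n : ℕ} {A : Matrix (Fin n) (Fin n) ℝ} {k l m : ℕ} {v : Vec n}
    (hA : ShiftsBy A k) (hv : ∀ s : Fin n, m < s + l → v s = 0) :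
    ∀ r : Fin n, m < r + (k + l) → A.mulVec v r = 0 := by
  intro r h
  rw [Matrix.mulVec, dotProduct]
  refine Finset.sum_eq_zero fun t _ => ?_
  by_cases ht : (t : ℕ) < r + k
  · rw [hA r t ht, zero_mul]
  · rw [hv t (by omega), mul_zero]

theorem ShiftsBy.mulVec_single {n : ℕ} {A : Matrix (Fin n) (Fin n) ℝ} {k : ℕ}
    (hA : ShiftsBy A k) (i : Fin n) :
    ∀ r : Fin n, (i : ℕ) < r + k → A.mulVec (Pi.single i 1) r = 0 := by
  refine hA.mulVec (l := 0) fun s hs => Pi.single_eq_of_ne ?_ _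
  rintro rfl
  omega

/-- A coordinate of `η` that vanishes identically also vanishes on every directional derivative
of `η`. No differentiability is assumed: where `η` is not differentiable, `fderiv` is `0`. -/
theorem fderiv_apply_eq_zero {n : ℕ} {η : VF n} {s : Fin n} (h : ∀ y, η y s = 0)
    (x v : Vec n) : fderiv ℝ η x v s = 0 := by
  by_cases hd : DifferentiableAt ℝ η x
  · have h1 := (hasFDerivAt_pi'.mp hd.hasFDerivAt) s
    have h2 : (fun y => η y s) = fun _ => 0 := funext h
    rw [h2] at h1
    exact DFunLike.congr_fun (h1.unique (hasFDerivAt_const (0 : ℝ) x)) v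
  · simp [fderiv_zero_of_not_differentiableAt hd]

/-- One of the two terms of the bracket: if `w` lies `k₂` steps down the flag from index `i` and
`η` lies `k₃` steps down from index `j`, then lowering `Dη(w)` by `k₁` steps gives zero as soon as
`k₁ + k₂ + k₃` exceeds `i + j`. -/
theorem mulVec_fderiv_eq_zero {n : ℕ} {A : Matrix (Fin n) (Fin n) ℝ} {η : VF n} {w : Vec n}
    {i j k₁ k₂ k₃ : ℕ} (hA : ShiftsBy A k₁)
    (hw : ∀ s : Fin n, i < s + k₂ → w s = 0)
    (hη : ∀ y, ∀ s : Fin n, j < s + k₃ → η y s = 0)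
    (h : i + j < k₁ + k₂ + k₃) (x : Vec n) :
    A.mulVec (fderiv ℝ η x w) = 0 := by
  by_cases hi : i < k₂
  · have hw0 : w = 0 := funext fun s => hw s (by omega)
    rw [hw0, map_zero, Matrix.mulVec_zero]
  · funext r
    exact hA.mulVec (fun s hs => fderiv_apply_eq_zero (fun y => hη y s hs) x w) r (by omega)

/-- for strictly upper triangular operator fields `L, M` on ℝⁿ and
exponents with total degree `2n - 2`, the term
`L^{α₁}M^{β₁}[L^{α₂}M^{β₂}∂_{x_i}, L^{α₃}M^{β₃}∂_{x_j}]` vanishes identically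
whenever `i < n` or `j < n` (in 1-based indexing, i.e. `i` or `j` is not the
last index). -/
theorem stmt_15 (n : ℕ) (hn : 2 ≤ n) (L M : OpField n)
    (hL : SmoothOp L) (hM : SmoothOp M)
    (hLt : ∀ x : Vec n, StrictUpperTri (L x)) (hMt : ∀ x : Vec n, StrictUpperTri (M x))
    (a1 b1 a2 b2 a3 b3 : ℕ) (hsum : a1 + b1 + a2 + b2 + a3 + b3 = 2 * n - 2)
    (i j : Fin n) (hij : (i : ℕ) + 1 < n ∨ (j : ℕ) + 1 < n) :
    ∀ x : Vec n,
      app (fun y => (L y) ^ a1 * (M y) ^ b1)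
        (lieB
          (app (fun y => (L y) ^ a2 * (M y) ^ b2) (fun _ => Pi.single i 1))
          (app (fun y => (L y) ^ a3 * (M y) ^ b3) (fun _ => Pi.single j 1))) x = 0 := by
  intro x
  have hS : ∀ (a b : ℕ) (y : Vec n), ShiftsBy ((L y) ^ a * (M y) ^ b) (a + b) := fun a b y =>
    (ShiftsBy.pow (hLt y) a).mul (ShiftsBy.pow (hMt y) b)
  have hξ := fun y => (hS a2 b2 y).mulVec_single i
  have hη := fun y => (hS a3 b3 y).mulVec_single j
  have hi := i.isLt
  have hj := j.isLt
  change ((L x) ^ a1 * (M x) ^ b1).mulVec (fderiv ℝ _ x _ - fderiv ℝ _ x _) = 0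
  rw [Matrix.mulVec_sub]
  exact (congrArg₂ (· - ·) (mulVec_fderiv_eq_zero (hS a1 b1 x) (hξ x) hη (by omega) x)
    (mulVec_fderiv_eq_zero (hS a1 b1 x) (hη x) hξ (by omega) x)).trans (sub_zero 0)
end

section
/- Let L be a smooth operator field on ℝ⁴ such that at every point x the matrix L(x) has a single real eigenvalue of geometric multiplicity one (i.e. there exists λ ∈ ℝ with characteristic polynomial (t − λ)⁴ and rank(L(x) − λ·I) = 3). If the Haantjes torsion of L vanishes identically, H_L(ξ, η)(x) = 0 for all smooth vector fields ξ, η and all x, then L is locally reducible to upper triangular form near every point of ℝ⁴. -/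
/-!
A single Jordan block at every point means `L = λ + N` with `λ = tr L / 4` smooth, `N⁴ = 0` and
`N³ ≠ 0`. Adding a function multiple of the identity does not change the Haantjes torsion
(`haantjes_shift`), so `H_N = 0`. Fix a constant vector `e` with `N(p)³ e ≠ 0` and put `Fᵢ = Nⁱ e`;
near `p` the fields `F₃, F₂, F₁, F₀` form a frame adapted to the flag
`ker N ⊂ ker N² ⊂ ker N³`. Written out in terms of the brackets `[Fᵢ, Fⱼ]`, the equations
`H_N(F₁,F₂) = H_N(F₀,F₂) = H_N(F₀,F₁) = 0` combine linearly to `N²[F₂,F₃] = 0`,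
`N³[F₁,F₃] = 0` and `N³[F₁,F₂] = 0` (`cyclic_relations`): every distribution `ker Nᵏ` is involutive.
Since `L` preserves each of them, it remains to find coordinates in which the flag is the standard
coordinate flag (`locallyReducible_of_flag`).

These coordinates come from a Frobenius theorem for flags in dimension `n`
(`exists_flag_parametrisation`). The parametrisation is
`Θ(t) = Φ₀^{t₀} ∘ Φ₁^{t₁} ∘ ⋯ (p)`, where `Φₘ` is the flow of the `m`-th frame field `f m`. The flow
of `f m` preserves `span (f 0, …, f (k-1))` for every `k > m`, because the components of a
transported vector transverse to this distribution satisfy a homogeneous linear differential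
equation (`flow_preserves`); hence `∂Θ/∂tᵢ` lies in `span (f 0, …, f i)`. The inverse function
theorem turns `Θ` into a chart.

Joint smoothness of the flow in time and initial point (`exists_smooth_flow`) is obtained from the
implicit function theorem in `C([0,1], E)`: the rescaled integral curve `γ(s) = φ(ts, x)` solves
`γ - x - t ∫₀ˢ X(γ) = 0`, and superposition with a smooth `X` is a smooth map of `C([0,1], E)`.
-/

open Matrix

open Set Filter Topology

/-! ### Smooth dependence of flows on initial conditions -/

/-- The superposition (Nemytskii) operator `γ ↦ X ∘ γ` on continuous maps from a compact space. -/
def superpose {K E F : Type} [TopologicalSpace K] [TopologicalSpace E] [TopologicalSpace F]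
    (X : E → F) (hX : Continuous X) (γ : C(K, E)) : C(K, F) :=
  (⟨X, hX⟩ : C(E, F)).comp γ

/-- Pointwise application of a continuous family of operators to a continuous family of vectors,
as a continuous bilinear map. -/
noncomputable def pointwiseApply (K E F : Type) [TopologicalSpace K] [CompactSpace K]
    [NormedAddCommGroup E] [NormedSpace ℝ E] [NormedAddCommGroup F] [NormedSpace ℝ F] :
    C(K, E →L[ℝ] F) →L[ℝ] C(K, E) →L[ℝ] C(K, F) :=
  LinearMap.mkContinuous₂
    (LinearMap.mk₂ ℝ (fun (A : C(K, E →L[ℝ] F)) (h : C(K, E)) =>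
        (⟨fun s => A s (h s), by fun_prop⟩ : C(K, F)))
      (by intros; ext; simp) (by intros; ext; simp) (by intros; ext; simp) (by intros; ext; simp))
    1 (by
      intro A h
      rw [ContinuousMap.norm_le _ (by positivity)]
      intro s
      calc ‖A s (h s)‖ ≤ ‖A s‖ * ‖h s‖ := (A s).le_opNorm _
        _ ≤ 1 * ‖A‖ * ‖h‖ := by
          rw [one_mul]; gcongr <;> exact ContinuousMap.norm_coe_le_norm _ s)

@[simp] lemma pointwiseApply_apply {K E F : Type} [TopologicalSpace K] [CompactSpace K]
    [NormedAddCommGroup E] [NormedSpace ℝ E] [NormedAddCommGroup F] [NormedSpace ℝ F]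
    (A : C(K, E →L[ℝ] F)) (h : C(K, E)) (s : K) :
    pointwiseApply K E F A h s = A s (h s) := rfl

/-- The superposition operator of a `C¹` map is Fréchet differentiable, the derivative at `γ`
being multiplication by `DX ∘ γ`: the remainder is controlled by the mean value inequality and the
continuity of superposition by `DX`. -/
lemma hasFDerivAt_superpose {K E F : Type} [TopologicalSpace K] [CompactSpace K]
    [NormedAddCommGroup E] [NormedSpace ℝ E] [NormedAddCommGroup F] [NormedSpace ℝ F]
    (X : E → F) (hX : Differentiable ℝ X) (hX' : Continuous (fderiv ℝ X)) (γ : C(K, E)) :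
    HasFDerivAt (superpose (K := K) X hX.continuous)
      (pointwiseApply K E F (superpose (fderiv ℝ X) hX' γ)) γ := by
  rw [hasFDerivAt_iff_isLittleO_nhds_zero, Asymptotics.isLittleO_iff]
  intro c hc
  have hcont : Continuous (superpose (K := K) (fderiv ℝ X) hX') :=
    ContinuousMap.continuous_postcomp _
  have hcont' : ContinuousAt (superpose (K := K) (fderiv ℝ X) hX') γ := hcont.continuousAt
  obtain ⟨δ, hδ, hδ'⟩ := (Metric.continuousAt_iff (α := C(K, E)) (β := C(K, E →L[ℝ] F))
    (f := superpose (fderiv ℝ X) hX') (a := γ)).1 hcont' c hc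
  filter_upwards [Metric.ball_mem_nhds (0 : C(K, E)) hδ] with h hh
  rw [mem_ball_zero_iff] at hh
  rw [ContinuousMap.norm_le _ (by positivity)]
  intro s
  have hseg : ∀ y ∈ segment ℝ (γ s) (γ s + h s), ‖fderiv ℝ X y - fderiv ℝ X (γ s)‖ ≤ c := by
    intro y hy
    rw [segment_eq_image'] at hy
    obtain ⟨θ, hθ, rfl⟩ := hy
    have h1 : dist (γ + θ • h) γ < δ := by
      rw [dist_eq_norm, add_sub_cancel_left, norm_smul, Real.norm_of_nonneg hθ.1]
      calc θ * ‖h‖ ≤ 1 * ‖h‖ := by gcongr; exact hθ.2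
        _ < δ := by simpa using hh
    have h2 : dist (fderiv ℝ X (γ s + θ • h s)) (fderiv ℝ X (γ s)) ≤ c :=
      (ContinuousMap.dist_apply_le_dist s).trans (hδ' h1).le
    rw [dist_eq_norm] at h2
    simpa using h2
  have := Convex.norm_image_sub_le_of_norm_hasFDerivWithin_le' (f := X) (f' := fderiv ℝ X)
    (fun y _ => (hX y).hasFDerivAt.hasFDerivWithinAt) hseg (convex_segment _ _)
    (left_mem_segment _ _ _) (right_mem_segment _ _ _)
  rw [add_sub_cancel_left] at this
  refine le_trans ?_ (this.trans ?_)
  · simp [superpose]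
  · gcongr; exact ContinuousMap.norm_coe_le_norm _ s

lemma contDiff_superpose_nat {K E : Type} [TopologicalSpace K] [CompactSpace K]
    [NormedAddCommGroup E] [NormedSpace ℝ E] (n : ℕ) :
    ∀ {F : Type} [NormedAddCommGroup F] [NormedSpace ℝ F] (X : E → F)
      (hX : ContDiff ℝ (⊤ : ℕ∞) X),
      ContDiff ℝ n (superpose (K := K) X hX.continuous) := by
  induction n with
  | zero =>
    intro F _ _ X hX
    exact contDiff_zero.2 (ContinuousMap.continuous_postcomp _)
  | succ n ih =>
    intro F _ _ X hX
    obtain ⟨h1, h2⟩ := contDiff_infty_iff_fderiv.1 hX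
    refine contDiff_succ_iff_hasFDerivAt.2
      ⟨fun γ => pointwiseApply K E F (superpose (fderiv ℝ X) h2.continuous γ), ?_,
        fun γ => hasFDerivAt_superpose X h1 h2.continuous γ⟩
    exact (pointwiseApply K E F).contDiff.comp (ih (fderiv ℝ X) h2)

lemma contDiff_superpose {K E F : Type} [TopologicalSpace K] [CompactSpace K]
    [NormedAddCommGroup E] [NormedSpace ℝ E] [NormedAddCommGroup F] [NormedSpace ℝ F]
    (X : E → F) (hX : ContDiff ℝ (⊤ : ℕ∞) X) :
    ContDiff ℝ (⊤ : ℕ∞) (superpose (K := K) X hX.continuous) :=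
  contDiff_infty.2 fun n => contDiff_superpose_nat n X hX

/-- The integration operator `γ ↦ (s ↦ ∫₀ˢ γ)` on `C([0,1], E)`. -/
noncomputable def integrateCLM (E : Type) [NormedAddCommGroup E] [NormedSpace ℝ E] :
    C(Icc (0 : ℝ) 1, E) →L[ℝ] C(Icc (0 : ℝ) 1, E) :=
  have hcont : ∀ γ : C(Icc (0 : ℝ) 1, E),
      Continuous fun u : ℝ => γ (projIcc 0 1 zero_le_one u) := fun γ =>
    γ.continuous.comp continuous_projIcc
  LinearMap.mkContinuous
    { toFun := fun γ => ⟨fun s => ∫ u in (0 : ℝ)..s, γ (projIcc 0 1 zero_le_one u),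
        (intervalIntegral.continuous_primitive
          (fun a b => (hcont γ).intervalIntegrable a b) 0).comp continuous_subtype_val⟩
      map_add' := fun γ η => by
        ext s
        simp only [ContinuousMap.add_apply, ContinuousMap.coe_mk]
        exact intervalIntegral.integral_add ((hcont γ).intervalIntegrable _ _)
          ((hcont η).intervalIntegrable _ _)
      map_smul' := fun c γ => by
        ext s
        simp }
    1 (by
      intro γ
      rw [ContinuousMap.norm_le _ (by positivity)]
      intro s
      simp only [LinearMap.coe_mk, AddHom.coe_mk, ContinuousMap.coe_mk]
      refine (intervalIntegral.norm_integral_le_of_norm_le_const (C := ‖γ‖)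
        (fun u _ => ContinuousMap.norm_coe_le_norm γ _)).trans ?_
      have h0 := s.2.1
      have h1 := s.2.2
      rw [sub_zero, abs_of_nonneg h0]
      nlinarith [norm_nonneg γ])

lemma integrateCLM_apply {E : Type} [NormedAddCommGroup E] [NormedSpace ℝ E]
    (γ : C(Icc (0 : ℝ) 1, E)) (s : Icc (0 : ℝ) 1) :
    integrateCLM E γ s = ∫ u in (0 : ℝ)..s, γ (projIcc 0 1 zero_le_one u) := rfl

/-- A solution of a smooth implicit equation with invertible partial derivative that is merely
continuous at the base point is smooth on a whole neighbourhood of it. -/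
lemma eventually_contDiffAt_of_implicit {Z G : Type}
    [NormedAddCommGroup Z] [NormedSpace ℝ Z] [CompleteSpace Z]
    [NormedAddCommGroup G] [NormedSpace ℝ G] [CompleteSpace G]
    (H : Z × G → G) (hH : ContDiff ℝ (⊤ : ℕ∞) H) (g : Z → G) (z₀ : Z)
    (hg : ContinuousAt g z₀) (h0 : ∀ᶠ z in 𝓝 z₀, H (z, g z) = 0)
    (hinv : (fderiv ℝ H (z₀, g z₀) ∘L .inr ℝ Z G).IsInvertible) :
    ∀ᶠ z in 𝓝 z₀, ContDiffAt ℝ (⊤ : ℕ∞) g z := by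
  have key : ∀ z₁, ContinuousAt g z₁ → (∀ᶠ z in 𝓝 z₁, H (z, g z) = 0) →
      (fderiv ℝ H (z₁, g z₁) ∘L .inr ℝ Z G).IsInvertible → ContDiffAt ℝ (⊤ : ℕ∞) g z₁ := by
    intro z₁ hc he hi
    have hH1 : ContDiffAt ℝ (⊤ : ℕ∞) H (z₁, g z₁) := hH.contDiffAt
    have hn : ((⊤ : ℕ∞) : WithTop ℕ∞) ≠ 0 := by simp
    have hψ := hH1.contDiffAt_implicitFunction hn hi
    refine hψ.congr_of_eventuallyEq ?_
    have ht : Tendsto (fun z => (z, g z)) (𝓝 z₁) (𝓝 (z₁, g z₁)) :=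
      continuousAt_id.prodMk hc
    filter_upwards [ht.eventually (hH1.eventually_apply_eq_iff_implicitFunction hn hi), he]
      with z h1 h2
    exact (h1.1 (h2.trans he.self_of_nhds.symm)).symm
  have hg1 : ContDiffAt ℝ 1 g z₀ := (key z₀ hg h0 hinv).of_le (by exact_mod_cast le_top)
  have hcont : ContinuousAt (fun z => fderiv ℝ H (z, g z) ∘L .inr ℝ Z G) z₀ := by
    have h1 : Continuous (fderiv ℝ H) := hH.continuous_fderiv (by simp)
    have h2 : ContinuousAt (fun z => fderiv ℝ H (z, g z)) z₀ :=
      ContinuousAt.comp' (f := fun z => (z, g z)) h1.continuousAt (continuousAt_id.prodMk hg)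
    exact h2.clm_comp continuousAt_const
  have hopen := hcont.eventually_mem (ContinuousLinearEquiv.isOpen.mem_nhds hinv)
  filter_upwards [hg1.eventually (by simp), h0.eventually_nhds, hopen] with z h1 h2 h3
  exact key z h1.continuousAt h2 h3

/-- A smooth vector field has a local flow that is jointly smooth in time and initial point.
The rescaled integral curves `s ↦ φ (t s, x)`, `s ∈ [0,1]`, solve a smooth implicit equation in the
Banach space `C([0,1], E)` whose linearisation at `t = 0` is the identity. -/
theorem exists_smooth_flow {E : Type} [NormedAddCommGroup E] [NormedSpace ℝ E] [CompleteSpace E]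
    (X : E → E) (hX : ContDiff ℝ (⊤ : ℕ∞) X) (p : E) :
    ∃ φ : ℝ × E → E, ∀ᶠ z in 𝓝 ((0 : ℝ), p), ContDiffAt ℝ (⊤ : ℕ∞) φ z ∧
      φ (0, z.2) = z.2 ∧ HasDerivAt (fun s => φ (s, z.2)) (X (φ z)) z.1 := by
  classical
  obtain ⟨ε, hε, a, r, L, K, hr, hpl⟩ :=
    IsPicardLindelof.of_contDiffAt_one (f := X) (x₀ := p)
      (hX.contDiffAt.of_le (by exact_mod_cast le_top))
  obtain ⟨α, hα, hαc⟩ :=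
    (hpl 0).exists_forall_mem_closedBall_eq_hasDerivWithinAt_continuousOn
  simp only [zero_sub, zero_add] at hα hαc
  have hder : ∀ x ∈ Metric.closedBall p r, ∀ t ∈ Ioo (-ε) ε,
      HasDerivAt (fun s => α (x, s)) (X (α (x, t))) t := fun x hx t ht =>
    ((hα x hx).2 t (Ioo_subset_Icc_self ht)).hasDerivAt (Icc_mem_nhds ht.1 ht.2)
  -- points `(t, x)` at which everything is controlled
  have hgood : ∀ᶠ z in 𝓝 ((0 : ℝ), p), z.1 ∈ Ioo (-ε) ε ∧ z.2 ∈ Metric.closedBall p r := by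
    refine (prod_mem_nhds (Ioo_mem_nhds (by linarith) hε)
      (Metric.closedBall_mem_nhds p (by exact_mod_cast hr)))
  have hscale : ∀ t ∈ Ioo (-ε) ε, ∀ s ∈ Icc (0 : ℝ) 1, t * s ∈ Ioo (-ε) ε := by
    intro t ht s hs
    rw [mem_Ioo, ← abs_lt] at *
    rw [abs_mul, abs_of_nonneg hs.1]
    nlinarith [hs.2, abs_nonneg t]
  have hcc : ∀ t ∈ Ioo (-ε) ε, ∀ x ∈ Metric.closedBall p r,
      Continuous fun s : Icc (0 : ℝ) 1 => α (x, t * s) := by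
    intro t ht x hx
    refine hαc.comp_continuous (by fun_prop) fun s => ⟨hx, Ioo_subset_Icc_self (hscale t ht s s.2)⟩
  let g : ℝ × E → C(Icc (0 : ℝ) 1, E) := fun z =>
    if h : Continuous fun s : Icc (0 : ℝ) 1 => α (z.2, z.1 * s) then ⟨_, h⟩ else 0
  have hg : ∀ z : ℝ × E, z.1 ∈ Ioo (-ε) ε → z.2 ∈ Metric.closedBall p r →
      ∀ s, g z s = α (z.2, z.1 * s) := by
    intro z h1 h2 s
    simp only [g, dif_pos (hcc z.1 h1 z.2 h2)]
    rfl
  have hp : p ∈ Metric.closedBall p r := Metric.mem_closedBall_self r.2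
  have h00 : (0 : ℝ) ∈ Ioo (-ε) ε := ⟨by linarith, hε⟩
  have hg0 : g (0, p) = ContinuousMap.const _ p := by
    ext1 s
    rw [hg _ h00 hp]
    simpa using (hα p hp).1
  have hgc : ContinuousAt g (0, p) := by
    rw [Metric.continuousAt_iff']
    intro δ hδ
    have hα0 : ContinuousAt α (p, 0) := hαc.continuousAt
      (prod_mem_nhds (Metric.closedBall_mem_nhds p (by exact_mod_cast hr))
        (Icc_mem_nhds (by linarith) hε))
    obtain ⟨η, hη, hη'⟩ := Metric.continuousAt_iff.1 hα0 (δ / 2) (by linarith)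
    filter_upwards [hgood, Metric.ball_mem_nhds ((0 : ℝ), p) hη] with z hz hzη
    refine lt_of_le_of_lt ?_ (half_lt_self hδ)
    rw [ContinuousMap.dist_le (by linarith)]
    intro s
    rw [hg z hz.1 hz.2, hg0, ContinuousMap.const_apply]
    have h1 : dist (z.2, z.1 * (s : ℝ)) (p, (0 : ℝ)) < η := by
      rw [Metric.mem_ball, Prod.dist_eq, max_lt_iff] at hzη
      rw [Prod.dist_eq, max_lt_iff]
      refine ⟨hzη.2, lt_of_le_of_lt ?_ hzη.1⟩
      simp only [dist_zero_right, Real.norm_eq_abs, abs_mul, abs_of_nonneg s.2.1]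
      exact mul_le_of_le_one_right (abs_nonneg _) s.2.2
    have h2 := hη' h1
    rw [(hα p hp).1] at h2
    exact h2.le
  let H : (ℝ × E) × C(Icc (0 : ℝ) 1, E) → C(Icc (0 : ℝ) 1, E) := fun w =>
    w.2 - ContinuousLinearMap.const ℝ (Icc (0 : ℝ) 1) w.1.2
      - w.1.1 • integrateCLM E (superpose X hX.continuous w.2)
  have hsup := contDiff_superpose (K := Icc (0 : ℝ) 1) X hX
  have hH : ContDiff ℝ (⊤ : ℕ∞) H := by
    have hs : ContDiff ℝ (⊤ : ℕ∞) fun w : (ℝ × E) × C(Icc (0 : ℝ) 1, E) =>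
        integrateCLM E (superpose X hX.continuous w.2) :=
      (integrateCLM E).contDiff.comp (hsup.comp contDiff_snd)
    have hc : ContDiff ℝ (⊤ : ℕ∞) fun w : (ℝ × E) × C(Icc (0 : ℝ) 1, E) =>
        (ContinuousLinearMap.const ℝ (Icc (0 : ℝ) 1) w.1.2 : C(Icc (0 : ℝ) 1, E)) :=
      (ContinuousLinearMap.const (R := ℝ) (M := E) (Icc (0 : ℝ) 1)).contDiff.comp
        (contDiff_snd.comp contDiff_fst)
    exact (contDiff_snd.sub hc).sub ((contDiff_fst.comp contDiff_fst).smul hs)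
  have hHg : ∀ᶠ z in 𝓝 ((0 : ℝ), p), H (z, g z) = 0 := by
    filter_upwards [hgood] with z hz
    ext1 s
    have hX' : ∀ u ∈ uIcc (0 : ℝ) s, HasDerivAt (fun u => α (z.2, z.1 * u))
        (z.1 • X (α (z.2, z.1 * u))) u := by
      intro u hu
      rw [uIcc_of_le s.2.1] at hu
      have h1 := hder z.2 hz.2 _ (hscale z.1 hz.1 u ⟨hu.1, hu.2.trans s.2.2⟩)
      have h2 : HasDerivAt (fun u : ℝ => z.1 * u) z.1 u := by
        simpa using (hasDerivAt_id u).const_mul z.1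
      exact h1.scomp u h2
    have hintegral : ∫ u in (0 : ℝ)..s, z.1 • X (g z (projIcc 0 1 zero_le_one u)) =
        α (z.2, z.1 * s) - z.2 := by
      have h1 : α (z.2, z.1 * s) - z.2 = α (z.2, z.1 * s) - α (z.2, z.1 * 0) := by
        rw [mul_zero, (hα z.2 hz.2).1]
      rw [h1, ← intervalIntegral.integral_eq_sub_of_hasDerivAt (f := fun u => α (z.2, z.1 * u))
        hX']
      · refine intervalIntegral.integral_congr fun u hu => ?_
        rw [uIcc_of_le s.2.1] at hu
        rw [hg z hz.1 hz.2, projIcc_of_mem _ ⟨hu.1, hu.2.trans s.2.2⟩]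
      · refine ContinuousOn.intervalIntegrable fun u hu => ?_
        exact ((hX.continuous.continuousAt.comp (hX' u hu).continuousAt).const_smul
          z.1).continuousWithinAt
    rw [intervalIntegral.integral_smul] at hintegral
    simp only [H, ContinuousMap.sub_apply, ContinuousMap.smul_apply, integrateCLM_apply,
      ContinuousMap.zero_apply, hg z hz.1 hz.2 s]
    have h3 : ∀ u : ℝ, superpose X hX.continuous (g z) (projIcc 0 1 zero_le_one u) =
        X (g z (projIcc 0 1 zero_le_one u)) := fun u => rfl
    simp only [h3, hintegral, ContinuousLinearMap.const_apply_apply]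
    abel
  have hHi : (fderiv ℝ H ((0, p), g (0, p)) ∘L
      .inr ℝ (ℝ × E) C(Icc (0 : ℝ) 1, E)).IsInvertible := by
    have h1 : HasFDerivAt (fun γ : C(Icc (0 : ℝ) 1, E) => H ((0, p), γ))
        (fderiv ℝ H ((0, p), g (0, p)) ∘L .inr ℝ (ℝ × E) C(Icc (0 : ℝ) 1, E)) (g (0, p)) :=
      ((hH.differentiable (by simp)) ((0, p), g (0, p))).hasFDerivAt.comp (g (0, p))
        (hasFDerivAt_prodMk_right (0, p) (g (0, p)))
    have h2 : (fun γ : C(Icc (0 : ℝ) 1, E) => H ((0, p), γ)) = fun γ =>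
        γ - ContinuousLinearMap.const ℝ (Icc (0 : ℝ) 1) p := by
      funext γ
      simp [H]
    rw [h2] at h1
    exact ⟨ContinuousLinearEquiv.refl ℝ _, ((hasFDerivAt_id _).sub_const _).unique h1⟩
  have hsm := eventually_contDiffAt_of_implicit H hH g (0, p) hgc hHg hHi
  let one : Icc (0 : ℝ) 1 := ⟨1, by simp⟩
  have hev : ∀ z : ℝ × E, z.1 ∈ Ioo (-ε) ε → z.2 ∈ Metric.closedBall p r →
      g z one = α (z.2, z.1) := fun z h1 h2 => by rw [hg z h1 h2]; simp [one]
  refine ⟨fun z => α (z.2, z.1), ?_⟩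
  filter_upwards [hgood, hgood.eventually_nhds, hsm] with z hz hz' hs
  refine ⟨?_, (hα z.2 hz.2).1, hder z.2 hz.2 z.1 hz.1⟩
  have h1 : ContDiffAt ℝ (⊤ : ℕ∞) (fun z => g z one) z :=
    ContDiffAt.comp z
      (ContinuousMap.evalCLM ℝ (M := E) one).contDiff.contDiffAt hs
  refine h1.congr_of_eventuallyEq ?_
  filter_upwards [hz'] with w hw
  exact (hev w hw.1 hw.2).symm

/-! ### Moving frames -/

/-- The linear map `c ↦ ∑ j, c j • f j y` determined by a family `f` of vector fields. -/
noncomputable def frameCLM {n : ℕ} (f : Fin n → VF n) (y : Vec n) : Vec n →L[ℝ] Vec n :=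
  ∑ j, (ContinuousLinearMap.proj (R := ℝ) (φ := fun _ : Fin n => ℝ) j).smulRight (f j y)

/-- The dual coframe: `coframe f y v` is the coordinate vector of `v` in the frame `f · y`.
It is `0` where `f · y` is not a basis. -/
noncomputable def coframe {n : ℕ} (f : Fin n → VF n) (y : Vec n) : Vec n →L[ℝ] Vec n :=
  Ring.inverse (frameCLM f y)

section frame

variable {n : ℕ} {f : Fin n → VF n} {y : Vec n}

lemma frameCLM_apply (c : Vec n) : frameCLM f y c = ∑ j, c j • f j y := by
  simp [frameCLM]

lemma frameCLM_single (j : Fin n) : frameCLM f y (Pi.single j 1) = f j y := by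
  rw [frameCLM_apply, Finset.sum_eq_single j] <;> simp +contextual

lemma frameCLM_coframe (h : IsUnit (frameCLM f y)) (v : Vec n) :
    frameCLM f y (coframe f y v) = v := by
  have := Ring.mul_inverse_cancel _ h
  exact DFunLike.congr_fun this v

lemma coframe_frameCLM (h : IsUnit (frameCLM f y)) (v : Vec n) :
    coframe f y (frameCLM f y v) = v := by
  have := Ring.inverse_mul_cancel _ h
  exact DFunLike.congr_fun this v

lemma coframe_frame (h : IsUnit (frameCLM f y)) (j : Fin n) :
    coframe f y (f j y) = Pi.single j 1 := by
  rw [← frameCLM_single (f := f), coframe_frameCLM h]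

lemma contDiff_frameCLM (hf : ∀ j, SmoothVF (f j)) : ContDiff ℝ (⊤ : ℕ∞) (frameCLM f) := by
  unfold frameCLM
  exact ContDiff.sum fun j _ => contDiff_const.smulRight (hf j)

lemma contDiffAt_coframe (hf : ∀ j, SmoothVF (f j)) (h : IsUnit (frameCLM f y)) :
    ContDiffAt ℝ (⊤ : ℕ∞) (coframe f) y := by
  obtain ⟨u, hu⟩ := h
  have h1 := contDiffAt_ringInverse (n := (⊤ : ℕ∞)) ℝ u
  rw [hu] at h1
  exact h1.comp y (contDiff_frameCLM hf).contDiffAt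

lemma eventually_isUnit_frameCLM (hf : ∀ j, SmoothVF (f j)) (h : IsUnit (frameCLM f y)) :
    ∀ᶠ z in 𝓝 y, IsUnit (frameCLM f z) :=
  (contDiff_frameCLM hf).continuous.continuousAt.eventually_mem (Units.isOpen.mem_nhds h)

end frame

/-! ### Distributions preserved by a flow -/

/-- Uniqueness for homogeneous linear differential equations. -/
lemma linear_ode_eq_zero {E : Type} [NormedAddCommGroup E] [NormedSpace ℝ E]
    {ε : ℝ} (C : ℝ → E →L[ℝ] E) (hC : ContinuousOn C (Ioo (-ε) ε)) (z : ℝ → E)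
    (hz : ∀ t ∈ Ioo (-ε) ε, HasDerivAt z (C t (z t)) t) (h0 : z 0 = 0) :
    ∀ t ∈ Ioo (-ε) ε, z t = 0 := by
  intro t ht
  obtain ⟨δ, hδ1, hδ2⟩ := exists_between (abs_lt.2 ht)
  have hsub : Icc (-δ) δ ⊆ Ioo (-ε) ε := fun s hs => ⟨by linarith [hs.1], by linarith [hs.2]⟩
  obtain ⟨K, hK⟩ := isCompact_Icc.exists_bound_of_continuousOn (hC.mono hsub)
  have hδ0 : 0 < δ := (abs_nonneg t).trans_lt hδ1
  have hK0 : 0 ≤ K := (norm_nonneg _).trans (hK 0 ⟨by linarith, hδ0.le⟩)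
  have := ODE_solution_unique_of_mem_Ioo (v := fun s x => C s x) (s := fun _ => univ)
    (K := ⟨K, hK0⟩) (f := z) (g := fun _ => 0) (a := -δ) (b := δ) (t₀ := 0)
    (fun s hs => by
      refine ((C s).lipschitz.weaken ?_).lipschitzOnWith
      exact hK s (Ioo_subset_Icc_self hs))
    ⟨by linarith, hδ0⟩
    (fun s hs => ⟨hz s (hsub (Ioo_subset_Icc_self hs)), mem_univ _⟩)
    (fun s hs => ⟨by simpa using hasDerivAt_const s (0 : E), mem_univ _⟩) (by simpa using h0)
  exact this (abs_lt.1 hδ1)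

/-- The variational equation: derivatives of a flow with respect to the initial point solve the
linearised equation. -/
lemma hasDerivAt_fderiv_flow {n : ℕ} {X : VF n} (hX : SmoothVF X) {φ : ℝ × Vec n → Vec n}
    {t : ℝ} {x : Vec n} (v : Vec n) (hφ : ContDiffAt ℝ (⊤ : ℕ∞) φ (t, x))
    (hflow : ∀ᶠ z in 𝓝 (t, x), fderiv ℝ φ z (1, 0) = X (φ z)) :
    HasDerivAt (fun s => fderiv ℝ φ (s, x) (0, v))
      (fderiv ℝ X (φ (t, x)) (fderiv ℝ φ (t, x) (0, v))) t := by
  have hd : HasFDerivAt (fderiv ℝ φ) (fderiv ℝ (fderiv ℝ φ) (t, x)) (t, x) :=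
    ((hφ.fderiv_right (m := 1) (by norm_cast)).differentiableAt (by simp)).hasFDerivAt
  have hsymm : fderiv ℝ (fderiv ℝ φ) (t, x) (1, 0) (0, v) =
      fderiv ℝ (fderiv ℝ φ) (t, x) (0, v) (1, 0) :=
    hφ.isSymmSndFDerivAt (by simp; norm_cast) _ _
  have hφd : HasFDerivAt φ (fderiv ℝ φ (t, x)) (t, x) :=
    (hφ.differentiableAt (by simp)).hasFDerivAt
  have h1 : HasFDerivAt (fun z => fderiv ℝ φ z (1, 0))
      ((ContinuousLinearMap.apply ℝ (Vec n) ((1 : ℝ), (0 : Vec n))).comp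
        (fderiv ℝ (fderiv ℝ φ) (t, x))) (t, x) :=
    (ContinuousLinearMap.apply ℝ (Vec n) ((1 : ℝ), (0 : Vec n))).hasFDerivAt.comp (t, x) hd
  have h2 : HasFDerivAt (fun z => X (φ z))
      ((fderiv ℝ X (φ (t, x))).comp (fderiv ℝ φ (t, x))) (t, x) :=
    (((hX.differentiable (by simp)) (φ (t, x))).hasFDerivAt).comp (t, x) hφd
  have h3 := (h1.congr_of_eventuallyEq (hflow.mono fun z hz => hz.symm)).unique h2
  have h4 := DFunLike.congr_fun h3 ((0 : ℝ), v)
  simp only [ContinuousLinearMap.comp_apply, ContinuousLinearMap.apply_apply] at h4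
  rw [← h4, ← hsymm]
  have h5 : HasDerivAt (fun s : ℝ => (s, x)) ((1 : ℝ), (0 : Vec n)) t :=
    (hasDerivAt_id t).prodMk (hasDerivAt_const t x)
  have h6 := hd.comp_hasDerivAt t h5
  exact ((ContinuousLinearMap.apply ℝ (Vec n) ((0 : ℝ), v)).hasFDerivAt.comp_hasDerivAt t h6)

/-- The projection of `ℝⁿ` killing the first `k` coordinates. -/
noncomputable def tailProj (n k : ℕ) : Vec n →L[ℝ] Vec n :=
  ContinuousLinearMap.pi fun r => if k ≤ (r : ℕ) then ContinuousLinearMap.proj r else 0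

lemma tailProj_apply {n k : ℕ} (c : Vec n) (r : Fin n) :
    tailProj n k c r = if k ≤ (r : ℕ) then c r else 0 := by
  simp only [tailProj, ContinuousLinearMap.coe_pi']
  split_ifs <;> simp

lemma tailProj_eq_zero {n k : ℕ} {c : Vec n} :
    tailProj n k c = 0 ↔ ∀ r : Fin n, k ≤ (r : ℕ) → c r = 0 := by
  rw [funext_iff]
  simp only [tailProj_apply, Pi.zero_apply, ite_eq_right_iff]

/-- If `X` satisfies `[X, f j] ∈ span (f 0, …, f (k-1))` for `j < k`, then the flow of `X` preserves
the distribution `span (f 0, …, f (k-1))`: the coordinates of index `≥ k` of a transported vector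
solve a homogeneous linear differential equation. -/
lemma flow_preserves {n : ℕ} {X : VF n} (hX : SmoothVF X) {f : Fin n → VF n}
    (hf : ∀ j, SmoothVF (f j)) {φ : ℝ × Vec n → Vec n} {x v : Vec n} {ε : ℝ} {k : ℕ}
    (hφ : ∀ t ∈ Ioo (-ε) ε, ContDiffAt ℝ (⊤ : ℕ∞) φ (t, x))
    (hflow : ∀ t ∈ Ioo (-ε) ε, ∀ᶠ z in 𝓝 (t, x), fderiv ℝ φ z (1, 0) = X (φ z))
    (hunit : ∀ t ∈ Ioo (-ε) ε, IsUnit (frameCLM f (φ (t, x))))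
    (hinv : ∀ t ∈ Ioo (-ε) ε, ∀ j r : Fin n, (j : ℕ) < k → k ≤ (r : ℕ) →
      coframe f (φ (t, x)) (lieB X (f j) (φ (t, x))) r = 0)
    (h0 : ∀ r : Fin n, k ≤ (r : ℕ) → coframe f (φ (0, x)) (fderiv ℝ φ (0, x) (0, v)) r = 0) :
    ∀ t ∈ Ioo (-ε) ε, ∀ r : Fin n, k ≤ (r : ℕ) →
      coframe f (φ (t, x)) (fderiv ℝ φ (t, x) (0, v)) r = 0 := by
  set π := tailProj n k with hπ
  let G : Vec n → Vec n →L[ℝ] Vec n := fun y =>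
    fderiv ℝ (coframe f) y (X y) + (coframe f y).comp (fderiv ℝ X y)
  have hG : ∀ y, IsUnit (frameCLM f y) → ∀ j, G y (f j y) = - coframe f y (lieB X (f j) y) := by
    intro y hy j
    have h1 : HasFDerivAt (fun z => coframe f z (f j z)) _ y :=
      ((contDiffAt_coframe hf hy).differentiableAt (by simp)).hasFDerivAt.clm_apply
        ((hf j).differentiable (by simp) y).hasFDerivAt
    have h2 : HasFDerivAt (fun z => coframe f z (f j z)) (0 : Vec n →L[ℝ] Vec n) y :=
      (hasFDerivAt_const (Pi.single j 1) y).congr_of_eventuallyEq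
        ((eventually_isUnit_frameCLM hf hy).mono fun z hz => coframe_frame hz j)
    have h3 := DFunLike.congr_fun (h1.unique h2) (X y)
    simp only [_root_.add_apply, ContinuousLinearMap.comp_apply,
      ContinuousLinearMap.flip_apply, _root_.zero_apply] at h3
    simp only [G, lieB, _root_.add_apply, ContinuousLinearMap.comp_apply, map_sub]
    linear_combination h3
  have hGc : ∀ y, IsUnit (frameCLM f y) → ContinuousAt G y := by
    intro y hy
    have hA := contDiffAt_coframe hf hy
    have h1 : ContinuousAt (fderiv ℝ (coframe f)) y :=
      (hA.fderiv_right (m := 0) (by norm_cast)).continuousAt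
    have h2 : Continuous (fderiv ℝ X) := hX.continuous_fderiv (by simp)
    exact (h1.clm_apply hX.continuous.continuousAt).add
      (hA.continuousAt.clm_comp h2.continuousAt)
  let w : ℝ → Vec n := fun t => coframe f (φ (t, x)) (fderiv ℝ φ (t, x) (0, v))
  have hw : ∀ t ∈ Ioo (-ε) ε,
      HasDerivAt w (G (φ (t, x)) (frameCLM f (φ (t, x)) (w t))) t := by
    intro t ht
    have h1 := hasDerivAt_fderiv_flow hX v (hφ t ht) (hflow t ht)
    have h5 : HasDerivAt (fun s : ℝ => (s, x)) ((1 : ℝ), (0 : Vec n)) t :=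
      (hasDerivAt_id t).prodMk (hasDerivAt_const t x)
    have h2 : HasDerivAt (fun s => φ (s, x)) (X (φ (t, x))) t := by
      rw [← (hflow t ht).self_of_nhds]
      exact ((hφ t ht).differentiableAt (by simp)).hasFDerivAt.comp_hasDerivAt t h5
    have h3 := ((contDiffAt_coframe hf (hunit t ht)).differentiableAt
      (by simp)).hasFDerivAt.comp_hasDerivAt t h2
    have h4 := h3.clm_apply h1
    rw [frameCLM_coframe (hunit t ht)]
    exact h4
  have hππ : ∀ c, π (π c) = π c := by
    intro c; ext r; simp only [hπ, tailProj_apply]; split_ifs <;> rfl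
  have hz : ∀ t ∈ Ioo (-ε) ε, HasDerivAt (fun s => π (w s))
      ((π.comp ((G (φ (t, x))).comp ((frameCLM f (φ (t, x))).comp π))) (π (w t))) t := by
    intro t ht
    suffices h : π (G (φ (t, x)) (frameCLM f (φ (t, x)) (π (π (w t))))) =
        π (G (φ (t, x)) (frameCLM f (φ (t, x)) (w t))) from
      (π.hasFDerivAt.comp_hasDerivAt t (hw t ht)).congr_deriv h.symm
    rw [hππ, ← sub_eq_zero, ← map_sub, ← map_sub, ← map_sub, frameCLM_apply, map_sum, map_sum]
    refine Finset.sum_eq_zero fun j _ => ?_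
    rw [map_smul, map_smul, hG _ (hunit t ht), Pi.sub_apply, hπ, tailProj_apply]
    split_ifs with hj
    · simp
    · rw [tailProj_eq_zero.2, smul_zero]
      intro r hr
      rw [Pi.neg_apply, hinv t ht j r (not_le.1 hj) hr, neg_zero]
  have hC : ContinuousOn (fun t =>
      π.comp ((G (φ (t, x))).comp ((frameCLM f (φ (t, x))).comp π))) (Ioo (-ε) ε) := by
    intro t ht
    have hc : ContinuousAt (fun s => φ (s, x)) t :=
      ContinuousAt.comp' (f := fun s : ℝ => (s, x)) (hφ t ht).continuousAt (by fun_prop)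
    have h1 : ContinuousAt (fun s => G (φ (s, x))) t :=
      ContinuousAt.comp' (f := fun s => φ (s, x)) (hGc _ (hunit t ht)) hc
    have h2 : ContinuousAt (fun s => frameCLM f (φ (s, x))) t :=
      ContinuousAt.comp' (f := fun s => φ (s, x))
        (contDiff_frameCLM hf).continuous.continuousAt hc
    exact (continuousAt_const.clm_comp
      (h1.clm_comp (h2.clm_comp continuousAt_const))).continuousWithinAt
  intro t ht
  exact tailProj_eq_zero.1 (linear_ode_eq_zero _ hC _ hz (tailProj_eq_zero.2 h0) t ht)

/-! ### Coordinates adapted to a flag of involutive distributions -/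

/-- One step of the construction of adapted coordinates: flow the parametrisation `Θ` along
`f m`, with the `m`-th parameter as time. Before the step `Θ` depends only on the parameters of
index `> m`, and its `i`-th partial derivative lies in `span (f 0, …, f i)` for these `i`. -/
lemma flag_step {n : ℕ} {f : Fin n → VF n} (hf : ∀ j, SmoothVF (f j)) {p : Vec n}
    (hp : IsUnit (frameCLM f p)) (m : Fin n)
    (hinv : ∀ᶠ y in 𝓝 p, ∀ j r : Fin n, m < r → j < r →
      coframe f y (lieB (f m) (f j) y) r = 0)
    {Θ : VF n} (h0 : Θ 0 = p)
    (hΘ : ∀ᶠ t in 𝓝 0, ContDiffAt ℝ (⊤ : ℕ∞) Θ t ∧ ∀ i : Fin n,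
      (i ≤ m → fderiv ℝ Θ t (Pi.single i 1) = 0) ∧
      (m < i → ∀ r, i < r → coframe f (Θ t) (fderiv ℝ Θ t (Pi.single i 1)) r = 0))
    (hΘ' : ∀ i, m < i → fderiv ℝ Θ 0 (Pi.single i 1) = f i p) :
    ∃ Θ' : VF n, Θ' 0 = p ∧
      (∀ᶠ t in 𝓝 0, ContDiffAt ℝ (⊤ : ℕ∞) Θ' t ∧ ∀ i : Fin n,
        (i < m → fderiv ℝ Θ' t (Pi.single i 1) = 0) ∧
        (m ≤ i → ∀ r, i < r → coframe f (Θ' t) (fderiv ℝ Θ' t (Pi.single i 1)) r = 0)) ∧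
      ∀ i, m ≤ i → fderiv ℝ Θ' 0 (Pi.single i 1) = f i p := by
  obtain ⟨φ, hφ⟩ := exists_smooth_flow (f m) (hf m) p
  have hφ0 : φ (0, p) = p := hφ.self_of_nhds.2.1
  have hφc : ContinuousAt φ (0, p) := hφ.self_of_nhds.1.continuousAt
  -- the time derivative of the flow, as a directional derivative
  have hφt : ∀ᶠ z in 𝓝 ((0 : ℝ), p), fderiv ℝ φ z (1, 0) = f m (φ z) := by
    filter_upwards [hφ] with z hz
    have h5 : HasDerivAt (fun s : ℝ => (s, z.2)) ((1 : ℝ), (0 : Vec n)) z.1 :=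
      (hasDerivAt_id _).prodMk (hasDerivAt_const _ _)
    exact ((hz.1.differentiableAt (by simp)).hasFDerivAt.comp_hasDerivAt (f := fun s => (s, z.2))
      z.1 h5).unique hz.2.2
  have hφx : ∀ᶠ z in 𝓝 ((0 : ℝ), p), IsUnit (frameCLM f (φ z)) ∧
      ∀ j r : Fin n, m < r → j < r → coframe f (φ z) (lieB (f m) (f j) (φ z)) r = 0 := by
    have h := (eventually_isUnit_frameCLM hf hp).and hinv
    rw [← hφ0] at h
    exact hφc.eventually h
  obtain ⟨ε, hε, hgood⟩ := Metric.eventually_nhds_iff_ball.1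
    (hφ.eventually_nhds.and (hφt.eventually_nhds.and hφx))
  have hball : ∀ s ∈ Ioo (-ε) ε, ∀ x ∈ Metric.ball p ε, (s, x) ∈ Metric.ball ((0 : ℝ), p) ε := by
    intro s hs x hx
    rw [← ball_prod_same]
    exact ⟨by simpa [abs_lt] using hs, hx⟩
  -- the initial condition for the variational equation
  have hinit : ∀ x ∈ Metric.ball p ε, ∀ v, fderiv ℝ φ (0, x) (0, v) = v := by
    intro x hx v
    have hg := hgood _ (hball 0 ⟨by linarith, hε⟩ x hx)
    have h5 : HasFDerivAt (fun y : Vec n => ((0 : ℝ), y)) (.inr ℝ ℝ (Vec n)) x :=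
      hasFDerivAt_prodMk_right 0 x
    have h6 := (hg.1.self_of_nhds.1.differentiableAt (by simp)).hasFDerivAt.comp x h5
    have h7 : HasFDerivAt (fun y => φ (0, y)) (ContinuousLinearMap.id ℝ (Vec n)) x := by
      refine (hasFDerivAt_id x).congr_of_eventuallyEq ?_
      filter_upwards [h5.continuousAt.eventually hg.1] with y hy
      exact hy.2.1
    exact DFunLike.congr_fun (h6.unique h7) v
  have hΘc : ContinuousAt Θ 0 := hΘ.self_of_nhds.1.continuousAt
  have hder : ∀ t : Vec n, ContDiffAt ℝ (⊤ : ℕ∞) Θ t → ContDiffAt ℝ (⊤ : ℕ∞) φ (t m, Θ t) →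
      ContDiffAt ℝ (⊤ : ℕ∞) (fun t => φ (t m, Θ t)) t ∧
      ∀ v, fderiv ℝ (fun t => φ (t m, Θ t)) t v =
        fderiv ℝ φ (t m, Θ t) (v m, fderiv ℝ Θ t v) := by
    intro t h1 h2
    have h3 : ContDiffAt ℝ (⊤ : ℕ∞) (fun t : Vec n => (t m, Θ t)) t :=
      (contDiff_apply ℝ ℝ m).contDiffAt.prodMk h1
    refine ⟨h2.comp t h3, fun v => ?_⟩
    have h4 : HasFDerivAt (fun t : Vec n => (t m, Θ t))
        ((ContinuousLinearMap.proj (R := ℝ) (φ := fun _ : Fin n => ℝ) m).prod (fderiv ℝ Θ t)) t :=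
      (ContinuousLinearMap.proj (R := ℝ) (φ := fun _ : Fin n => ℝ) m).hasFDerivAt.prodMk
        (h1.differentiableAt (by simp)).hasFDerivAt
    exact DFunLike.congr_fun ((h2.differentiableAt (by simp)).hasFDerivAt.comp t h4).fderiv v
  have hsplit : ∀ (A : ℝ × Vec n →L[ℝ] Vec n) (s : ℝ) (v : Vec n),
      A (s, v) = s • A (1, 0) + A (0, v) := by
    intro A s v
    rw [← map_smul, ← map_add]
    simp
  refine ⟨fun t => φ (t m, Θ t), by simp [h0, hφ0], ?_, ?_⟩
  · have ht1 : ∀ᶠ t in 𝓝 (0 : Vec n), t m ∈ Ioo (-ε) ε :=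
      (continuous_apply m).continuousAt.eventually_mem
        (by simpa using Ioo_mem_nhds (neg_lt_zero.2 hε) hε)
    have ht2 : ∀ᶠ t in 𝓝 (0 : Vec n), Θ t ∈ Metric.ball p ε :=
      hΘc.eventually_mem (by rw [h0]; exact Metric.ball_mem_nhds p hε)
    filter_upwards [hΘ, ht1, ht2] with t ht ht1 ht2
    have hg := hgood _ (hball _ ht1 _ ht2)
    obtain ⟨hs, hd⟩ := hder t ht.1 hg.1.self_of_nhds.1
    refine ⟨hs, fun i => ⟨fun hi => ?_, fun hi r hr => ?_⟩⟩
    · rw [hd, (ht.2 i).1 hi.le, Pi.single_eq_of_ne hi.ne']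
      exact map_zero _
    · rw [hd]
      rcases hi.eq_or_lt with rfl | hi
      · rw [(ht.2 m).1 le_rfl, Pi.single_eq_same, hg.2.1.self_of_nhds, coframe_frame hg.2.2.1,
          Pi.single_eq_of_ne hr.ne']
      · rw [Pi.single_eq_of_ne hi.ne]
        refine flow_preserves (hf m) hf (ε := ε) (k := i + 1)
          (fun s hs => (hgood _ (hball s hs _ ht2)).1.self_of_nhds.1)
          (fun s hs => (hgood _ (hball s hs _ ht2)).2.1)
          (fun s hs => (hgood _ (hball s hs _ ht2)).2.2.1) ?_ ?_ _ ht1 r hr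
        · intro s hs j r hj hr
          exact (hgood _ (hball s hs _ ht2)).2.2.2 j r (hi.trans hr)
            (Fin.lt_def.2 (hj.trans_le hr))
        · intro r hr
          have h00 : (0 : ℝ) ∈ Ioo (-ε) ε := ⟨by linarith, hε⟩
          rw [hinit _ ht2, (hgood _ (hball 0 h00 _ ht2)).1.self_of_nhds.2.1]
          exact (ht.2 i).2 hi r hr
  · intro i hi
    have h1 : ContDiffAt ℝ (⊤ : ℕ∞) φ ((0 : Vec n) m, Θ 0) := by
      rw [h0]; exact hφ.self_of_nhds.1
    rw [(hder 0 hΘ.self_of_nhds.1 h1).2, h0, Pi.zero_apply, hsplit, hφt.self_of_nhds, hφ0,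
      hinit p (Metric.mem_ball_self hε)]
    rcases hi.eq_or_lt with rfl | hi
    · rw [Pi.single_eq_same, (hΘ.self_of_nhds.2 m).1 le_rfl]; simp
    · rw [Pi.single_eq_of_ne hi.ne, hΘ' i hi]; simp

/-- Simultaneous rectification of a flag: if every `f m` preserves all the distributions
`span (f 0, …, f (r-1))` with `m < r`, there is a parametrisation of a neighbourhood of `p` whose
coordinate vector fields `∂₀, …, ∂ᵢ` span the same distributions. -/
lemma exists_flag_parametrisation {n : ℕ} {f : Fin n → VF n} (hf : ∀ j, SmoothVF (f j)) {p : Vec n}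
    (hp : IsUnit (frameCLM f p))
    (hinv : ∀ᶠ y in 𝓝 p, ∀ m j r : Fin n, m < r → j < r →
      coframe f y (lieB (f m) (f j) y) r = 0) :
    ∃ Θ : VF n, Θ 0 = p ∧
      (∀ᶠ t in 𝓝 0, ContDiffAt ℝ (⊤ : ℕ∞) Θ t ∧ ∀ i r : Fin n, i < r →
        coframe f (Θ t) (fderiv ℝ Θ t (Pi.single i 1)) r = 0) ∧
      fderiv ℝ Θ 0 = frameCLM f p := by
  have key : ∀ d m : ℕ, m + d = n → ∃ Θ : VF n, Θ 0 = p ∧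
      (∀ᶠ t in 𝓝 0, ContDiffAt ℝ (⊤ : ℕ∞) Θ t ∧ ∀ i : Fin n,
        ((i : ℕ) < m → fderiv ℝ Θ t (Pi.single i 1) = 0) ∧
        (m ≤ (i : ℕ) → ∀ r, i < r → coframe f (Θ t) (fderiv ℝ Θ t (Pi.single i 1)) r = 0)) ∧
      ∀ i : Fin n, m ≤ (i : ℕ) → fderiv ℝ Θ 0 (Pi.single i 1) = f i p := by
    intro d
    induction d with
    | zero =>
      intro m hm
      refine ⟨fun _ => p, rfl, Eventually.of_forall fun t => ⟨contDiffAt_const, fun i => ⟨?_, ?_⟩⟩,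
        ?_⟩
      · intro _; simp
      · intro hi; exact absurd i.2 (by omega)
      · intro i hi; exact absurd i.2 (by omega)
    | succ d ih =>
      intro m hm
      obtain ⟨Θ, h0, h1, h2⟩ := ih (m + 1) (by omega)
      refine flag_step hf hp ⟨m, by omega⟩
        (hinv.mono fun y hy j r => hy _ j r) h0 ?_ fun i hi => h2 i hi
      exact h1.mono fun t ht => ⟨ht.1, fun i =>
        ⟨fun hi => (ht.2 i).1 (Nat.lt_succ_of_le hi), fun hi => (ht.2 i).2 hi⟩⟩
  obtain ⟨Θ, h0, h1, h2⟩ := key n 0 (by omega)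
  refine ⟨Θ, h0, h1.mono fun t ht => ⟨ht.1, fun i => (ht.2 i).2 (Nat.zero_le _)⟩, ?_⟩
  refine ContinuousLinearMap.coe_injective (LinearMap.pi_ext' fun i => LinearMap.ext_ring ?_)
  simp only [LinearMap.comp_apply, ContinuousLinearMap.coe_coe, LinearMap.single_apply]
  rw [h2 i (Nat.zero_le _), frameCLM_single]

/-! ### Triangular form from an adapted flag -/

/-- The matrix form of `locallyReducible_of_flag` at one point: `A`, `B` are the coframe and the
frame, `D` the Jacobian matrix of a parametrisation and `D'` its inverse. -/
lemma upperTri_conj {n : ℕ} {A B D D' M : Matrix (Fin n) (Fin n) ℝ} (hBA : B * A = 1)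
    (hDD : D' * D = 1) (hAD : UpperTri (A * D)) (hM : UpperTri (A * M * B)) :
    UpperTri (D' * M * D) := by
  have h1 : (D' * B) * (A * D) = 1 := by
    rw [Matrix.mul_assoc, ← Matrix.mul_assoc B, hBA, Matrix.one_mul, hDD]
  have h2 : (A * D)⁻¹ = D' * B := Matrix.inv_eq_left_inv h1
  have : Invertible (A * D) := invertibleOfLeftInverse _ _ h1
  have hAD' : BlockTriangular (A * D) id := hAD
  have hM' : BlockTriangular (A * M * B) id := hM
  have h3 : BlockTriangular (D' * B) id := h2 ▸ blockTriangular_inv_of_blockTriangular hAD'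
  have h4 : D' * M * D = (D' * B) * (A * M * B) * (A * D) := by
    calc D' * M * D = D' * (B * A) * M * (B * A) * D := by simp [hBA]
      _ = _ := by simp only [Matrix.mul_assoc]
  rw [h4]
  exact (h3.mul hM').mul hAD'

lemma jacobianMatrix_eq {n : ℕ} (g : VF n) (x : Vec n) :
    jacobianMatrix g x = LinearMap.toMatrix' (fderiv ℝ g x : Vec n →ₗ[ℝ] Vec n) := by
  ext i j
  simp [jacobianMatrix, LinearMap.toMatrix'_apply]

/-- An operator field preserving each distribution `span (f 0, …, f j)` of a flag is upper
triangular in suitable coordinates, provided every one of these distributions is involutive. -/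
theorem locallyReducible_of_flag {n : ℕ} (L : OpField n) {f : Fin n → VF n}
    (hf : ∀ j, SmoothVF (f j)) {p : Vec n} (hp : IsUnit (frameCLM f p))
    (hinv : ∀ᶠ y in 𝓝 p, ∀ m j r : Fin n, m < r → j < r →
      coframe f y (lieB (f m) (f j) y) r = 0)
    (hL : ∀ᶠ y in 𝓝 p, ∀ j r : Fin n, j < r → coframe f y (L y *ᵥ f j y) r = 0) :
    LocallyReducible L p UpperTri := by
  obtain ⟨Θ, h0, h1, h2⟩ := exists_flag_parametrisation hf hp hinv
  have hΘ0 : ContDiffAt ℝ (⊤ : ℕ∞) Θ 0 := h1.self_of_nhds.1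
  obtain ⟨u, hu⟩ := hp
  have hder0 : HasFDerivAt Θ
      ((ContinuousLinearEquiv.unitsEquiv ℝ (Vec n) u : Vec n ≃L[ℝ] Vec n) : Vec n →L[ℝ] Vec n)
      0 := by
    have h := (hΘ0.differentiableAt (by simp)).hasFDerivAt
    rw [h2, ← hu] at h
    exact h
  let e := hΘ0.toOpenPartialHomeomorph Θ hder0 (by simp)
  have he0 : (0 : Vec n) ∈ e.source := hΘ0.mem_toOpenPartialHomeomorph_source hder0 (by simp)
  have hΘc : Tendsto Θ (𝓝 0) (𝓝 p) := by
    have := hΘ0.continuousAt.tendsto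
    rwa [h0] at this
  have hdu : ∀ᶠ t in 𝓝 0, IsUnit (fderiv ℝ Θ t) := by
    have hc : ContinuousAt (fderiv ℝ Θ) 0 :=
      (hΘ0.fderiv_right (m := 0) (by norm_cast)).continuousAt
    refine hc.eventually_mem (Units.isOpen.mem_nhds ?_)
    rw [h2]
    exact ⟨u, hu⟩
  obtain ⟨W, hW, hWo, hW0⟩ := eventually_nhds_iff.1 (h1.and (hdu.and
    ((hΘc.eventually (eventually_isUnit_frameCLM hf ⟨u, hu⟩)).and (hΘc.eventually hL))))
  let e' := e.restrOpen W hWo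
  have hsrc : e'.source = e.source ∩ W := e.restrOpen_source W hWo
  have himg : e'.symm '' e'.target = e'.source := e'.symm_image_target_eq_source
  have hequiv : ∀ t ∈ W, ∃ l : Vec n ≃L[ℝ] Vec n, HasFDerivAt Θ (l : Vec n →L[ℝ] Vec n) t := by
    intro t ht
    obtain ⟨l, hl⟩ := (hW t ht).2.1
    refine ⟨ContinuousLinearEquiv.unitsEquiv ℝ (Vec n) l, ?_⟩
    have h := ((hW t ht).1.1.differentiableAt (by simp)).hasFDerivAt
    rw [← hl] at h
    exact h
  have hsymm : ∀ y ∈ e'.target, ContDiffAt ℝ (⊤ : ℕ∞) e'.symm y := by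
    intro y hy
    have hs : e'.symm y ∈ W := (hsrc ▸ e'.map_target hy).2
    obtain ⟨l, hl⟩ := hequiv _ hs
    exact e'.contDiffAt_symm hy hl (hW _ hs).1.1
  refine ⟨e'.target, e'.open_target, ?_, e'.symm, Θ, fun y hy => (hsymm y hy).contDiffWithinAt,
    ?_, ?_, fun y hy => e'.right_inv hy, ?_, ?_⟩
  · rw [← h0]
    exact e'.map_source (hsrc ▸ ⟨he0, hW0⟩)
  · rw [himg]; exact e'.open_source
  · rw [himg]
    exact fun t ht => (hW t (hsrc ▸ ht).2).1.1.contDiffWithinAt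
  · rw [himg]
    exact fun t ht => e'.left_inv ht
  · rw [himg]
    intro t ht
    have htW : t ∈ W := (hsrc ▸ ht).2
    obtain ⟨⟨hs, htri⟩, -, hunit, hLt⟩ := hW t htW
    have hφd := (hsymm (Θ t) (e'.map_source ht)).differentiableAt (by simp)
    have hDD : (fderiv ℝ e'.symm (Θ t)).comp (fderiv ℝ Θ t) = ContinuousLinearMap.id ℝ _ := by
      have h3 := hφd.hasFDerivAt.comp t (hs.differentiableAt (by simp)).hasFDerivAt
      refine h3.unique ((hasFDerivAt_id t).congr_of_eventuallyEq ?_)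
      filter_upwards [e'.open_source.mem_nhds ht] with s hs
      exact e'.left_inv hs
    rw [jacobianMatrix_eq, jacobianMatrix_eq]
    refine upperTri_conj
      (A := LinearMap.toMatrix' (coframe f (Θ t) : Vec n →ₗ[ℝ] Vec n))
      (B := LinearMap.toMatrix' (frameCLM f (Θ t) : Vec n →ₗ[ℝ] Vec n)) ?_ ?_ ?_ ?_
    · rw [← LinearMap.toMatrix'_comp, ← LinearMap.toMatrix'_id]
      congr 1
      exact LinearMap.ext fun v => frameCLM_coframe hunit v
    · rw [← LinearMap.toMatrix'_comp, ← LinearMap.toMatrix'_id]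
      congr 1
      exact LinearMap.ext fun v => DFunLike.congr_fun hDD v
    · intro r i hir
      rw [← LinearMap.toMatrix'_comp, LinearMap.toMatrix'_apply]
      exact htri i r hir
    · intro r j hjr
      rw [← LinearMap.toMatrix'_toLin' (L (Θ t)), ← LinearMap.toMatrix'_comp,
        ← LinearMap.toMatrix'_comp, LinearMap.toMatrix'_apply]
      simp only [LinearMap.comp_apply, ContinuousLinearMap.coe_coe, frameCLM_single,
        Matrix.toLin'_apply]
      exact hLt j r hjr

/-! ### Haantjes torsion of a nilpotent shift -/

section torsion

variable {n : ℕ}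

lemma lieB_swap (ξ η : VF n) (x : Vec n) : lieB ξ η x = - lieB η ξ x := by
  simp [lieB]

lemma lieB_self (ξ : VF n) (x : Vec n) : lieB ξ ξ x = 0 := by
  simp [lieB]

lemma lieB_zero_right (ξ : VF n) (x : Vec n) : lieB ξ 0 x = 0 := by
  simp [lieB]

lemma lieB_smul_add_left {a : Vec n → ℝ} {ξ ξ' : VF n} (η : VF n) {x : Vec n}
    (ha : DifferentiableAt ℝ a x) (hξ : DifferentiableAt ℝ ξ x) (hξ' : DifferentiableAt ℝ ξ' x) :
    lieB (fun y => a y • ξ y + ξ' y) η x =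
      a x • lieB ξ η x - fderiv ℝ a x (η x) • ξ x + lieB ξ' η x := by
  have h : HasFDerivAt (fun y => a y • ξ y + ξ' y) _ x :=
    (ha.hasFDerivAt.smul hξ.hasFDerivAt).add hξ'.hasFDerivAt
  simp only [lieB, h.fderiv, _root_.add_apply, ContinuousLinearMap.smulRight_apply, map_add,
    map_smul]
  simp
  module

lemma SmoothVF.differentiableAt {ξ : VF n} (hξ : SmoothVF ξ) (x : Vec n) :
    DifferentiableAt ℝ ξ x :=
  ContDiff.differentiable hξ (by simp) x

lemma SmoothOp.app {K : OpField n} (hK : SmoothOp K) {ξ : VF n} (hξ : SmoothVF ξ) :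
    SmoothVF (app K ξ) := by
  refine contDiff_pi' fun i => ?_
  simp only [_root_.app, mulVec, dotProduct]
  exact ContDiff.sum fun j _ => (hK i j).mul ((contDiff_pi.1 hξ) j)

lemma nijTor_apply (K : OpField n) (ξ η : VF n) (x : Vec n) :
    nijTor K ξ η x = K x *ᵥ (K x *ᵥ lieB ξ η x) + lieB (app K ξ) (app K η) x
      - K x *ᵥ lieB (app K ξ) η x - K x *ᵥ lieB ξ (app K η) x := rfl

lemma haantjes_apply (K : OpField n) (ξ η : VF n) (x : Vec n) :
    haantjes K ξ η x = K x *ᵥ (K x *ᵥ nijTor K ξ η x) + nijTor K (app K ξ) (app K η) x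
      - K x *ᵥ nijTor K (app K ξ) η x - K x *ᵥ nijTor K ξ (app K η) x := rfl

lemma nijTor_swap (K : OpField n) (ξ η : VF n) (x : Vec n) :
    nijTor K ξ η x = - nijTor K η ξ x := by
  simp only [nijTor_apply, lieB_swap ξ, lieB_swap (app K ξ), mulVec_neg]
  abel

lemma nijTor_self (K : OpField n) (ξ : VF n) (x : Vec n) : nijTor K ξ ξ x = 0 := by
  have h := nijTor_swap K ξ ξ x
  rwa [eq_neg_iff_add_eq_zero, ← two_smul ℝ, smul_eq_zero_iff_right two_ne_zero] at h

/-- The Nijenhuis torsion is linear over functions in its first argument. -/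
lemma nijTor_smul_add_left {K : OpField n} (hK : SmoothOp K) {a : Vec n → ℝ}
    (ha : ContDiff ℝ (⊤ : ℕ∞) a) {ξ ξ' η : VF n} (hξ : SmoothVF ξ) (hξ' : SmoothVF ξ')
    (x : Vec n) :
    nijTor K (fun y => a y • ξ y + ξ' y) η x = a x • nijTor K ξ η x + nijTor K ξ' η x := by
  have h1 : app K (fun y => a y • ξ y + ξ' y) = fun y => a y • app K ξ y + app K ξ' y := by
    funext y; simp only [app, mulVec_add, mulVec_smul]
  have ha' := ha.differentiable (by simp) x
  simp only [nijTor_apply, h1]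
  rw [lieB_smul_add_left _ ha' (hξ.differentiableAt x) (hξ'.differentiableAt x),
    lieB_smul_add_left _ ha' (hξ.differentiableAt x) (hξ'.differentiableAt x),
    lieB_smul_add_left _ ha' ((hK.app hξ).differentiableAt x) ((hK.app hξ').differentiableAt x),
    lieB_smul_add_left _ ha' ((hK.app hξ).differentiableAt x) ((hK.app hξ').differentiableAt x)]
  simp only [mulVec_add, mulVec_sub, mulVec_smul]
  simp only [app]
  module

lemma nijTor_smul_add_right {K : OpField n} (hK : SmoothOp K) {a : Vec n → ℝ}
    (ha : ContDiff ℝ (⊤ : ℕ∞) a) {ξ η η' : VF n} (hη : SmoothVF η) (hη' : SmoothVF η')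
    (x : Vec n) :
    nijTor K ξ (fun y => a y • η y + η' y) x = a x • nijTor K ξ η x + nijTor K ξ η' x := by
  rw [nijTor_swap, nijTor_smul_add_left hK ha hη hη', nijTor_swap K ξ η, nijTor_swap K ξ η']
  module

variable {L N : OpField n} {lam : Vec n → ℝ}

lemma SmoothOp.of_shift (hN : SmoothOp N) (hlam : ContDiff ℝ (⊤ : ℕ∞) lam)
    (hLN : ∀ x, L x = lam x • (1 : Matrix (Fin n) (Fin n) ℝ) + N x) : SmoothOp L := by
  intro i j
  simp only [hLN, Matrix.add_apply, Matrix.smul_apply, smul_eq_mul]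
  exact (hlam.mul contDiff_const).add (hN i j)

lemma app_shift (hLN : ∀ x, L x = lam x • (1 : Matrix (Fin n) (Fin n) ℝ) + N x) (ξ : VF n) :
    app L ξ = fun y => lam y • ξ y + app N ξ y := by
  funext y
  simp only [app, hLN, add_mulVec, smul_mulVec, one_mulVec]

/-- Nijenhuis torsion of `N` shifted by a function multiple of the identity. -/
lemma nijTor_shift (hN : SmoothOp N) (hlam : ContDiff ℝ (⊤ : ℕ∞) lam)
    (hLN : ∀ x, L x = lam x • (1 : Matrix (Fin n) (Fin n) ℝ) + N x)
    {ξ η : VF n} (hξ : SmoothVF ξ) (hη : SmoothVF η) (x : Vec n) :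
    nijTor L ξ η x = nijTor N ξ η x
      + fderiv ℝ lam x (N x *ᵥ ξ x) • η x - fderiv ℝ lam x (N x *ᵥ η x) • ξ x
      + fderiv ℝ lam x (η x) • N x *ᵥ ξ x - fderiv ℝ lam x (ξ x) • N x *ᵥ η x := by
  have hl := hlam.differentiable (by simp) x
  have hleft : ∀ {ξ η : VF n}, SmoothVF ξ → lieB (app L ξ) η x =
      lam x • lieB ξ η x - fderiv ℝ lam x (η x) • ξ x + lieB (app N ξ) η x := by
    intro ξ η hξ
    rw [app_shift hLN, lieB_smul_add_left _ hl (hξ.differentiableAt x)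
      ((hN.app hξ).differentiableAt x)]
  have hright : ∀ {ξ η : VF n}, SmoothVF η → lieB ξ (app L η) x =
      lam x • lieB ξ η x + fderiv ℝ lam x (ξ x) • η x + lieB ξ (app N η) x := by
    intro ξ η hη
    rw [lieB_swap, hleft hη, lieB_swap η, lieB_swap (app N η)]
    module
  rw [nijTor_apply, nijTor_apply, hleft hξ, hleft hξ, hright hη, hright hη]
  have h1 : app L η x = lam x • η x + N x *ᵥ η x := congrFun (app_shift hLN η) x
  have h2 : app N ξ x = N x *ᵥ ξ x := rfl
  simp only [h1, h2, hLN, add_mulVec, smul_mulVec, one_mulVec, mulVec_add, mulVec_sub,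
    mulVec_smul, map_add, map_smul, smul_eq_mul]
  module

/-- The Haantjes torsion does not change when a function multiple of the identity is added to the
operator. -/
lemma haantjes_shift (hN : SmoothOp N) (hlam : ContDiff ℝ (⊤ : ℕ∞) lam)
    (hLN : ∀ x, L x = lam x • (1 : Matrix (Fin n) (Fin n) ℝ) + N x)
    {ξ η : VF n} (hξ : SmoothVF ξ) (hη : SmoothVF η) (x : Vec n) :
    haantjes L ξ η x = haantjes N ξ η x := by
  have hL : SmoothOp L := hN.of_shift hlam hLN
  have hNξ := hN.app hξ
  have hNη := hN.app hη
  have hleft : ∀ η : VF n, nijTor L (app L ξ) η x =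
      lam x • nijTor L ξ η x + nijTor L (app N ξ) η x := by
    intro η
    rw [app_shift hLN, nijTor_smul_add_left hL hlam hξ hNξ]
  have hright : ∀ ξ : VF n, nijTor L ξ (app L η) x =
      lam x • nijTor L ξ η x + nijTor L ξ (app N η) x := by
    intro ξ
    rw [app_shift hLN, nijTor_smul_add_right hL hlam hη hNη]
  rw [haantjes_apply, haantjes_apply, hleft, hleft, hright, hright,
    nijTor_shift hN hlam hLN hξ hη, nijTor_shift hN hlam hLN hNξ hη,
    nijTor_shift hN hlam hLN hξ hNη, nijTor_shift hN hlam hLN hNξ hNη]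
  have h1 : app N η x = N x *ᵥ η x := rfl
  have h2 : app N ξ x = N x *ᵥ ξ x := rfl
  simp only [h1, h2, hLN, add_mulVec, smul_mulVec, one_mulVec, mulVec_add, mulVec_sub,
    mulVec_smul]
  module

end torsion

/-! ### Cyclic vector fields in dimension four -/

/-- The vector fields `Nᵏ e` generated by an operator field from a constant vector. -/
def cyclicVF {n : ℕ} (N : OpField n) (e : Vec n) : ℕ → VF n
  | 0 => fun _ => e
  | k + 1 => app N (cyclicVF N e k)

section cyclic

variable {n : ℕ}

lemma cyclicVF_apply (N : OpField n) (e : Vec n) (k : ℕ) (x : Vec n) :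
    cyclicVF N e k x = (N x ^ k) *ᵥ e := by
  induction k with
  | zero => simp [cyclicVF]
  | succ k ih => rw [pow_succ', ← mulVec_mulVec, ← ih]; rfl

lemma smooth_cyclicVF {N : OpField n} (hN : SmoothOp N) (e : Vec n) (k : ℕ) :
    SmoothVF (cyclicVF N e k) := by
  induction k with
  | zero => exact contDiff_const
  | succ k ih => exact hN.app ih

/-- Integrability relations between the cyclic fields `Fᵢ = Nⁱ e` of a nilpotent operator field of
order four, extracted from `H_N(F₁,F₂) = H_N(F₀,F₂) = H_N(F₀,F₁) = 0`. -/
lemma cyclic_relations {N : OpField n} {e x : Vec n} (hN4 : ∀ y, N y ^ 4 = 0)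
    (h12 : haantjes N (cyclicVF N e 1) (cyclicVF N e 2) x = 0)
    (h02 : haantjes N (cyclicVF N e 0) (cyclicVF N e 2) x = 0)
    (h01 : haantjes N (cyclicVF N e 0) (cyclicVF N e 1) x = 0) :
    (N x ^ 2) *ᵥ lieB (cyclicVF N e 2) (cyclicVF N e 3) x = 0 ∧
    (N x ^ 3) *ᵥ lieB (cyclicVF N e 1) (cyclicVF N e 3) x = 0 ∧
    (N x ^ 3) *ᵥ lieB (cyclicVF N e 1) (cyclicVF N e 2) x = 0 := by
  have h4 : cyclicVF N e 4 = 0 := by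
    funext y; rw [cyclicVF_apply, hN4]; simp
  have hF : ∀ k, app N (cyclicVF N e k) = cyclicVF N e (k + 1) := fun _ => rfl
  -- everything becomes an identity in the `ℝ`-linear map `T = N x`
  set T := Matrix.mulVecLin (N x) with hT
  have hmul : ∀ v, N x *ᵥ v = T v := fun _ => rfl
  have hT4 : ∀ v, T (T (T (T v))) = 0 := by
    intro v
    have := congrArg (· *ᵥ v) (hN4 x)
    simpa [pow_succ, ← mulVec_mulVec, hT] using this
  simp only [haantjes_apply, nijTor_self, nijTor_apply, hF, hmul, Nat.reduceAdd, h4,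
    lieB_zero_right, lieB_self, map_add, map_sub, map_zero, hT4] at h12 h02 h01
  have k02 := congrArg T h02
  have k01 := congrArg T h01
  simp only [map_add, map_sub, map_zero, hT4] at k02 k01
  simp only [pow_succ, pow_zero, Matrix.one_mul, ← mulVec_mulVec, hmul]
  refine ⟨?_, ?_, ?_⟩
  · linear_combination (norm := module) (1 / 2 : ℝ) • h12 + (1 / 4 : ℝ) • k02
  · linear_combination (norm := module) (1 / 4 : ℝ) • h12 + (3 / 8 : ℝ) • k02
  · linear_combination (norm := module) (1 / 4 : ℝ) • h02 + (1 / 2 : ℝ) • k01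

end cyclic

/-- In the cyclic basis `M³e, M²e, Me, e` the kernel of `Mᵏ` is spanned by the first `k` vectors. -/
lemma cyclic_coeff_eq_zero {M : Matrix (Fin 4) (Fin 4) ℝ} {e : Vec 4} (hM : M ^ 4 = 0)
    (he : (M ^ 3) *ᵥ e ≠ 0) (c : Vec 4) (k : ℕ)
    (h : (M ^ k) *ᵥ (∑ j : Fin 4, c j • ((M ^ (3 - (j : ℕ))) *ᵥ e)) = 0) :
    ∀ r : Fin 4, k ≤ (r : ℕ) → c r = 0 := by
  have hz : ∀ i : ℕ, 4 ≤ i → M ^ i = 0 := fun i hi => pow_eq_zero_of_le hi hM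
  have hk : ∀ i : ℕ, k ≤ i →
      (M ^ i) *ᵥ (∑ j : Fin 4, c j • ((M ^ (3 - (j : ℕ))) *ᵥ e)) = 0 := by
    intro i hi
    obtain ⟨d, rfl⟩ := Nat.exists_eq_add_of_le' hi
    rw [pow_add, ← mulVec_mulVec, h, mulVec_zero]
  have hexp : ∀ i : ℕ, (M ^ i) *ᵥ (∑ j : Fin 4, c j • ((M ^ (3 - (j : ℕ))) *ᵥ e)) =
      c 0 • ((M ^ (i + 3)) *ᵥ e) + c 1 • ((M ^ (i + 2)) *ᵥ e) + c 2 • ((M ^ (i + 1)) *ᵥ e) +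
        c 3 • ((M ^ i) *ᵥ e) := by
    intro i
    simp [Fin.sum_univ_four, mulVec_add, mulVec_smul, mulVec_mulVec, ← pow_add, ← pow_succ]
  have c3 : k ≤ 3 → c 3 = 0 := by
    intro hle
    have := hk 3 hle
    rw [hexp] at this
    simpa [hz, he] using this
  have c2 : k ≤ 2 → c 2 = 0 := by
    intro hle
    have := hk 2 hle
    rw [hexp] at this
    simpa [hz, he, c3 (by omega)] using this
  have c1 : k ≤ 1 → c 1 = 0 := by
    intro hle
    have := hk 1 hle
    rw [hexp] at this
    simpa [hz, he, c3 (by omega), c2 (by omega)] using this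
  have c0 : k ≤ 0 → c 0 = 0 := by
    intro hle
    have := hk 0 hle
    rw [hexp] at this
    simpa [hz, he, c3 (by omega), c2 (by omega), c1 (by omega)] using this
  intro r hr
  fin_cases r
  · exact c0 hr
  · exact c1 hr
  · exact c2 hr
  · exact c3 hr

/-- A `4 × 4` matrix of rank three has nonzero cube: each application of it to a subspace lowers the
dimension by at most one. -/
lemma pow_three_ne_zero_of_rank {M : Matrix (Fin 4) (Fin 4) ℝ} (hM : M.rank = 3) : M ^ 3 ≠ 0 := by
  set T := M.mulVecLin with hT
  have hrk : Module.finrank ℝ (LinearMap.range T) = 3 := hM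
  have hker : Module.finrank ℝ (LinearMap.ker T) = 1 := by
    have := LinearMap.finrank_range_add_finrank_ker T
    simp only [Module.finrank_fintype_fun_eq_card, Fintype.card_fin] at this
    omega
  have hstep : ∀ S : Submodule ℝ (Fin 4 → ℝ),
      Module.finrank ℝ S ≤ Module.finrank ℝ (S.map T) + 1 := by
    intro S
    have h1 := LinearMap.finrank_range_add_finrank_ker (T.domRestrict S)
    rw [LinearMap.range_domRestrict] at h1
    have h2 : Module.finrank ℝ (LinearMap.ker (T.domRestrict S)) ≤ 1 := by
      rw [← hker]
      refine LinearMap.finrank_le_finrank_of_injective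
        (f := (S.subtype.comp (LinearMap.ker (T.domRestrict S)).subtype).codRestrict
          (LinearMap.ker T) fun v => v.2) ?_
      intro v w hvw
      have h3 := congrArg Subtype.val hvw
      exact Subtype.ext (Subtype.ext h3)
    omega
  intro h0
  have h2 := hstep (LinearMap.range T)
  have h3 := hstep ((LinearMap.range T).map T)
  have h4 : ((LinearMap.range T).map T).map T = ⊥ := by
    rw [eq_bot_iff]
    rintro _ ⟨_, ⟨_, ⟨v, rfl⟩, rfl⟩, rfl⟩
    have := congrArg (· *ᵥ v) h0
    simpa [pow_succ, ← mulVec_mulVec, hT] using this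
  rw [h4, finrank_bot] at h3
  omega

/-- The nilpotent case: for a smooth `N` with `N⁴ = 0` and `N(p)³ e ≠ 0`, the relations of
`cyclic_relations` make `N³e, N²e, Ne, e` a frame to which `locallyReducible_of_flag` applies. -/
lemma locallyReducible_of_relations {L N : OpField 4} {lam : Vec 4 → ℝ} (hN : SmoothOp N)
    (hLN : ∀ x, L x = lam x • (1 : Matrix (Fin 4) (Fin 4) ℝ) + N x)
    (hN4 : ∀ y, N y ^ 4 = 0) {e p : Vec 4} (he : (N p ^ 3) *ᵥ e ≠ 0)
    (hrel : ∀ x,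
      (N x ^ 2) *ᵥ lieB (cyclicVF N e 2) (cyclicVF N e 3) x = 0 ∧
      (N x ^ 3) *ᵥ lieB (cyclicVF N e 1) (cyclicVF N e 3) x = 0 ∧
      (N x ^ 3) *ᵥ lieB (cyclicVF N e 1) (cyclicVF N e 2) x = 0) :
    LocallyReducible L p UpperTri := by
  let f : Fin 4 → VF 4 := fun j => cyclicVF N e (3 - (j : ℕ))
  have hf : ∀ j, SmoothVF (f j) := fun j => smooth_cyclicVF hN e _
  have hsum : ∀ y c, frameCLM f y c = ∑ j : Fin 4, c j • ((N y ^ (3 - (j : ℕ))) *ᵥ e) := by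
    intro y c
    simp only [frameCLM_apply, f, cyclicVF_apply]
  have hunit : ∀ y, (N y ^ 3) *ᵥ e ≠ 0 → IsUnit (frameCLM f y) := by
    intro y hy
    have hinj : Function.Injective (frameCLM f y) := by
      refine (injective_iff_map_eq_zero _).2 fun c hc => ?_
      rw [hsum] at hc
      funext r
      exact cyclic_coeff_eq_zero (hN4 y) hy c 0 (by rw [hc, mulVec_zero]) r (Nat.zero_le _)
    exact ContinuousLinearMap.isUnit_iff_bijective.2 ⟨hinj,
      LinearMap.injective_iff_surjective (f := (frameCLM f y : Vec 4 →ₗ[ℝ] Vec 4)).1 hinj⟩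
  have hev : ∀ᶠ y in 𝓝 p, (N y ^ 3) *ᵥ e ≠ 0 := by
    have hc : Continuous (cyclicVF N e 3) := (smooth_cyclicVF hN e 3).continuous
    have h := (hc.continuousAt (x := p)).eventually_ne (by rwa [cyclicVF_apply] :
      cyclicVF N e 3 p ≠ 0)
    simpa only [cyclicVF_apply] using h
  -- a vector killed by `Nʳ` lies in the span of the first `r` frame fields
  have hco : ∀ y, (N y ^ 3) *ᵥ e ≠ 0 → ∀ (v : Vec 4) (r : Fin 4), (N y ^ (r : ℕ)) *ᵥ v = 0 →
      coframe f y v r = 0 := by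
    intro y hy v r hv
    refine cyclic_coeff_eq_zero (hN4 y) hy (coframe f y v) r ?_ r le_rfl
    rw [← hsum, frameCLM_coframe (hunit y hy), hv]
  refine locallyReducible_of_flag L hf (hunit p he) ?_ ?_
  · filter_upwards [hev] with y hy m j r hmr hjr
    refine hco y hy _ r ?_
    obtain ⟨h1, h2, h3⟩ := hrel y
    have h1' : (N y ^ 3) *ᵥ lieB (cyclicVF N e 2) (cyclicVF N e 3) y = 0 := by
      rw [pow_succ', ← mulVec_mulVec, h1, mulVec_zero]
    have hs : ∀ {k : ℕ} {ξ η : VF 4}, (N y ^ k) *ᵥ lieB ξ η y = 0 →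
        (N y ^ k) *ᵥ lieB η ξ y = 0 := by
      intro k ξ η h
      rw [lieB_swap, mulVec_neg, h, neg_zero]
    have h0 : ∀ (k : ℕ) (ξ : VF 4), (N y ^ k) *ᵥ lieB ξ ξ y = 0 := by
      intro k ξ; rw [lieB_self, mulVec_zero]
    match m, j, r, hmr, hjr with
    | 0, 0, _, _, _ | 1, 1, _, _, _ | 2, 2, _, _, _ => exact h0 _ _
    | 0, 1, 2, _, _ => exact hs h1
    | 1, 0, 2, _, _ => exact h1
    | 0, 1, 3, _, _ => exact hs h1'
    | 1, 0, 3, _, _ => exact h1'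
    | 0, 2, 3, _, _ => exact hs h2
    | 2, 0, 3, _, _ => exact h2
    | 1, 2, 3, _, _ => exact hs h3
    | 2, 1, 3, _, _ => exact h3
    | 3, _, r, hmr, _ => exact absurd (Fin.lt_def.1 hmr) (by have := r.2; simp; omega)
    | 0, 3, r, _, hjr | 1, 3, r, _, hjr | 2, 3, r, _, hjr =>
      exact absurd (Fin.lt_def.1 hjr) (by have := r.2; simp; omega)
  · filter_upwards [hev] with y hy j r hjr
    refine hco y hy _ r ?_
    have hz : ∀ i : ℕ, 4 ≤ i → N y ^ i = 0 := fun i hi => pow_eq_zero_of_le hi (hN4 y)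
    have hjr' : (j : ℕ) < r := hjr
    have hfj : f j y = (N y ^ (3 - (j : ℕ))) *ᵥ e := cyclicVF_apply N e _ y
    rw [hLN, add_mulVec, smul_mulVec, one_mulVec, mulVec_add, mulVec_smul, hfj, mulVec_mulVec,
      mulVec_mulVec, mulVec_mulVec, ← pow_succ, ← pow_add, ← pow_add, hz _ (by omega),
      hz _ (by omega)]
    simp

/-- in dimension 4, for an operator field similar at each point to
a single Jordan block, vanishing of the Haantjes torsion implies local
reducibility to upper triangular form near every point. -/
theorem stmt_16 (L : OpField 4) (hL : SmoothOp L)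
    (hJordan : ∀ x : Vec 4, ∃ lam : ℝ,
      (L x).charpoly = (Polynomial.X - Polynomial.C lam) ^ 4 ∧
      (L x - lam • (1 : Matrix (Fin 4) (Fin 4) ℝ)).rank = 3)
    (hH : ∀ ξ η : VF 4, SmoothVF ξ → SmoothVF η →
      ∀ x : Vec 4, haantjes L ξ η x = 0) :
    ∀ p : Vec 4, LocallyReducible L p UpperTri := by
  have hcard : Fintype.card (Fin 4) = 4 := rfl
  -- the eigenvalue is a quarter of the trace
  have htr : ∀ (x : Vec 4) (l : ℝ),
      (L x).charpoly = (Polynomial.X - Polynomial.C l) ^ 4 → (L x).trace / 4 = l := by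
    intro x l h
    rw [Matrix.trace_eq_neg_charpoly_coeff, h, hcard]
    have : (Polynomial.X - Polynomial.C l) ^ 4 = Polynomial.X ^ 4 - Polynomial.C (4 * l) *
        Polynomial.X ^ 3 + Polynomial.C (6 * l ^ 2) * Polynomial.X ^ 2
        - Polynomial.C (4 * l ^ 3) * Polynomial.X + Polynomial.C (l ^ 4) := by
      simp only [map_mul, map_pow, map_ofNat]; ring
    rw [this]
    simp only [Polynomial.coeff_add, Polynomial.coeff_sub, Polynomial.coeff_C_mul,
      Polynomial.coeff_X_pow, Polynomial.coeff_X, Polynomial.coeff_C]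
    norm_num
  let lam : Vec 4 → ℝ := fun x => (L x).trace / 4
  let N : OpField 4 := fun x => L x - lam x • 1
  have hlam : ContDiff ℝ (⊤ : ℕ∞) lam := by
    simp only [lam, Matrix.trace, Matrix.diag]
    exact (ContDiff.sum fun i _ => hL i i).div_const 4
  have hN : SmoothOp N := by
    intro i j
    simp only [N, Matrix.sub_apply, Matrix.smul_apply, smul_eq_mul]
    exact (hL i j).sub (hlam.mul contDiff_const)
  have hLN : ∀ x, L x = lam x • (1 : Matrix (Fin 4) (Fin 4) ℝ) + N x := by
    intro x; simp [N]
  have hN4 : ∀ y, N y ^ 4 = 0 := by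
    intro y
    obtain ⟨l, hl, -⟩ := hJordan y
    have h := Matrix.aeval_self_charpoly (L y)
    rw [hl] at h
    have h' : (L y - l • (1 : Matrix (Fin 4) (Fin 4) ℝ)) ^ 4 = 0 := by
      simpa [Algebra.algebraMap_eq_smul_one] using h
    simpa only [N, lam, htr y l hl] using h'
  have hN3 : ∀ y, N y ^ 3 ≠ 0 := by
    intro y
    obtain ⟨l, hl, hr⟩ := hJordan y
    refine pow_three_ne_zero_of_rank ?_
    simpa only [N, lam, htr y l hl] using hr
  intro p
  obtain ⟨e, he⟩ : ∃ e, (N p ^ 3) *ᵥ e ≠ 0 := by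
    by_contra! h
    exact hN3 p (Matrix.ext_of_mulVec_single fun i => by rw [h, zero_mulVec])
  refine locallyReducible_of_relations hN hLN hN4 he fun x => ?_
  have hHN : ∀ i j, haantjes N (cyclicVF N e i) (cyclicVF N e j) x = 0 := by
    intro i j
    have hi := smooth_cyclicVF hN e i
    have hj := smooth_cyclicVF hN e j
    rw [← haantjes_shift hN hlam hLN hi hj]
    exact hH _ _ hi hj x
  exact cyclic_relations hN4 (hHN 1 2) (hHN 0 2) (hHN 0 1)
end

section
/- There exists a smooth operator field on ℝ³ whose value at every point is an upper triangular matrix but whose Haantjes torsion does not vanish identically. Concretely, for the operator field L on ℝ³ (coordinates x₁, x₂, x₃) given by the matrix with rows (x₁, x₂, 0), (0, x₂, x₂), (0, 0, x₃), the Haantjes torsion H_L is not identically zero; in particular, the assumption in the three-dimensional triangularization theorem that L has a single eigenvalue at each point cannot be dropped. -/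
/-!
If `L ξ = λ ξ` and `L η = μ η` for functions `λ`, `μ`, then
`H_L(ξ, η) = (L - λ)² (L - μ)² [ξ, η]`; so `H_L` is nonzero as soon as the bracket of two eigenfields
has a component along an eigendirection with eigenvalue other than `λ`, `μ`.
With coordinates `x, y, z`, the operator field `Lut` has
the polynomial eigenfields `e₁`, `v = (y, y - x, 0)` and `w = (y², y (z - x), (z - x) (z - y))`, with
eigenvalues `x`, `y`, `z`. At the point `p = (0, 1, 2)` one finds
`[v, w] = (0, 0, -3) = -3/2 e₁ + 3 v - 3/2 w`, hence
`H_L(v, w) = (0 - 1)² (0 - 2)² · (-3/2) e₁ = -6 e₁ ≠ 0`.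

The general formula is not needed: since `Lⁱ v = yⁱ v` and `Lʲ w = zʲ w`, the torsion at `p` is a
combination of the brackets `[yⁱ v, zʲ w](p)`, `i, j ≤ 2`, which the Leibniz rule gives in closed form.
-/

open Matrix

/-- The upper triangular operator field on ℝ³ with rows
`(x₁, x₂, 0)`, `(0, x₂, x₂)`, `(0, 0, x₃)`. -/
noncomputable def Lut : OpField 3 := fun x =>
  !![x 0, x 1, 0;
     0, x 1, x 1;
     0, 0, x 2]

/-- The field `yⁱ v = Lutⁱ v`, where `v = (y, y - x, 0)` is an eigenfield with eigenvalue `y`. -/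
def eigY (i : ℕ) : VF 3 := fun x => x 1 ^ i • ![x 1, x 1 - x 0, 0]

/-- The field `zʲ w = Lutʲ w`, where `w = (y², y (z - x), (z - x) (z - y))` is an eigenfield with
eigenvalue `z`. -/
def eigZ (j : ℕ) : VF 3 := fun x =>
  x 2 ^ j • ![x 1 ^ 2, x 1 * (x 2 - x 0), (x 2 - x 0) * (x 2 - x 1)]

lemma app_eigY (i : ℕ) : app Lut (eigY i) = eigY (i + 1) := by
  funext x k
  fin_cases k <;> simp [app, Lut, eigY, Matrix.mulVec, dotProduct, Fin.sum_univ_three] <;> ring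

lemma app_eigZ (j : ℕ) : app Lut (eigZ j) = eigZ (j + 1) := by
  funext x k
  fin_cases k <;> simp [app, Lut, eigZ, Matrix.mulVec, dotProduct, Fin.sum_univ_three] <;> ring

lemma smooth_eigY (i : ℕ) : SmoothVF (eigY i) := by
  refine contDiff_pi.2 fun k => ?_
  fin_cases k <;> simp [eigY] <;> fun_prop

lemma smooth_eigZ (j : ℕ) : SmoothVF (eigZ j) := by
  refine contDiff_pi.2 fun k => ?_
  fin_cases k <;> simp [eigZ] <;> fun_prop

/-- A derivative along `u` is the derivative of the restriction to the line `t ↦ x + t u`, computed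
component by component. -/
lemma fderiv_eq_of_line {ξ : VF 3} (hξ : SmoothVF ξ) (x u d : Vec 3)
    (h : ∀ k, HasDerivAt (fun t : ℝ => ξ (x + t • u) k) (d k) 0) : fderiv ℝ ξ x u = d := by
  have hd : DifferentiableAt ℝ ξ x := (hξ.differentiable (by simp)) x
  rw [← hd.lineDeriv_eq_fderiv]
  exact (hasDerivAt_pi.2 h).deriv

lemma hasDerivAt_of_eq {f g : ℝ → ℝ} {a b t : ℝ} (hg : HasDerivAt g b t) (h : ∀ s, f s = g s)
    (hab : a = b) : HasDerivAt f a t := by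
  rw [funext h, hab]
  exact hg

/-- The Leibniz rule at `(0, 1, 2)`, where `v = (1, 1, 0)`, `w = (1, 2, 2)`, `v(z) = 0`, `w(y) = 2`
and `[v, w] = (0, 0, -3)`: the bracket is `2ʲ ([v, w] - 2 i v)`. -/
lemma lieB_eig (i j : ℕ) :
    lieB (eigY i) (eigZ j) ![0, 1, 2] = (2 : ℝ) ^ j • ![-2 * (i : ℝ), -2 * i, -3] := by
  have hv : eigY i ![0, 1, 2] = ![1, 1, 0] := by
    funext k; fin_cases k <;> simp [eigY]
  have hw : eigZ j ![0, 1, 2] = (2 : ℝ) ^ j • ![1, 2, 2] := by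
    funext k; fin_cases k <;> simp [eigZ]
    norm_num
  have h1 : fderiv ℝ (eigZ j) ![0, 1, 2] ![1, 1, 0] = (2 : ℝ) ^ j • ![2, 1, -3] := by
    refine fderiv_eq_of_line (smooth_eigZ j) _ _ _ fun k => ?_
    have ht : HasDerivAt (fun t : ℝ => t) 1 0 := hasDerivAt_id 0
    fin_cases k
    · refine hasDerivAt_of_eq (((ht.const_add 1).pow 2).const_mul ((2 : ℝ) ^ j))
        (fun t => ?_) ?_
      · simp [eigZ]
      · simp
    · refine hasDerivAt_of_eq (((ht.const_add 1).mul (ht.const_sub 2)).const_mul ((2 : ℝ) ^ j))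
        (fun t => ?_) ?_
      · simp [eigZ]
      · norm_num
    · refine hasDerivAt_of_eq (((ht.const_sub 2).mul (ht.const_sub 1)).const_mul ((2 : ℝ) ^ j))
        (fun t => ?_) ?_
      · simp [eigZ]; left; ring
      · norm_num
  have h2 : fderiv ℝ (eigY i) ![0, 1, 2] ![1, 2, 2] = ![2 * (i : ℝ) + 2, 2 * i + 1, 0] := by
    refine fderiv_eq_of_line (smooth_eigY i) _ _ _ fun k => ?_
    have ht : HasDerivAt (fun t : ℝ => t) 1 0 := hasDerivAt_id 0
    have hy := (ht.mul_const 2).const_add 1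
    fin_cases k
    · refine hasDerivAt_of_eq ((hy.pow i).mul hy) (fun t => ?_) ?_
      · simp [eigY]
      · simp; ring
    · refine hasDerivAt_of_eq ((hy.pow i).mul (ht.const_add 1)) (fun t => ?_) ?_
      · simp [eigY]; left; ring
      · simp; ring
    · refine hasDerivAt_of_eq (hasDerivAt_const (0 : ℝ) (0 : ℝ)) (fun t => ?_) ?_ <;> simp [eigY]
  rw [lieB, hv, hw, h1, map_smul, h2, ← smul_sub]
  congr 1
  funext k
  fin_cases k <;> simp

/-- there is a smooth upper triangular operator field on ℝ³ whose
Haantjes torsion does not vanish identically, namely `Lut`. -/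
theorem stmt_18 :
    SmoothOp Lut ∧
    (∀ x : Vec 3, UpperTri (Lut x)) ∧
    ¬ (∀ ξ η : VF 3, SmoothVF ξ → SmoothVF η →
        ∀ x : Vec 3, haantjes Lut ξ η x = 0) := by
  refine ⟨fun i j => ?_, fun x i j hij => ?_, fun h => ?_⟩
  · fin_cases i <;> fin_cases j <;> simp [Lut] <;> fun_prop
  · fin_cases i <;> fin_cases j <;> simp_all [Lut]
  · have h0 := congrFun (h (eigY 0) (eigZ 0) (smooth_eigY 0) (smooth_eigZ 0) ![0, 1, 2]) 0
    have e (ξ : VF 3) (x : Vec 3) : app Lut ξ x =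
        ![x 0 * ξ x 0 + x 1 * ξ x 1, x 1 * ξ x 1 + x 1 * ξ x 2, x 2 * ξ x 2] := by
      funext k
      fin_cases k <;> simp [app, Lut, Matrix.mulVec, dotProduct, Fin.sum_univ_three]
    simp only [haantjes, genTor, nijTor, app_eigY, app_eigZ, Pi.add_apply, Pi.sub_apply, e,
      lieB_eig] at h0
    have c (a b c : ℝ) : ![a, b, c] 2 = c := rfl
    norm_num [c] at h0
end
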